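/- arXiv:1604.08713 — 2 statements merged into one kernel-verified Lean document; each statement's English description precedes it below -/
import Mathlib

section
/- (Hyperbolic Chang–Wilson–Wolff inequality) Let d ∈ ℕ, d ≥ 2, and let n ∈ ℕ. Suppose f is a finite linear combination of multiparameter Haar functions h_{j,m} with j ∈ ℕ_{−1}^d, |j| = n, m ∈ 𝔻_j. Then ‖f | exp(L^{2/(d−1)})‖ ≤ C · ‖Sf‖_{L_∞([0,1)^d)} for an absolute constant C (depending only on d and the choice of Young function), where Sf(x) = (∑_{j∈ℕ_{−1}^d} 2^{2|j|} ∑_{m∈𝔻_j} |⟨f, h_{j,m}⟩|² 1_{I_{j,m}}(x))^{1/2} is the dyadic square function of f. -/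
open MeasureTheory
open scoped ENNReal

noncomputable section

/-- The closed unit cube `[0,1]^d`. -/
def unitCube (d : ℕ) : Set (Fin d → ℝ) := Set.univ.pi fun _ => Set.Icc (0:ℝ) 1

/-- The half-open unit cube `[0,1)^d`. -/
def unitCubeIco (d : ℕ) : Set (Fin d → ℝ) := Set.univ.pi fun _ => Set.Ico (0:ℝ) 1

/-- Discrepancy function of the first `N` points of the sequence `S` in `[0,1)^d`. -/
def discSeq (d : ℕ) (S : ℕ → Fin d → ℝ) (N : ℕ) (x : Fin d → ℝ) : ℝ :=
  (Nat.card {k : Fin N // ∀ i, S k i < x i} : ℝ) / N - ∏ i, x i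

/-- One-dimensional Haar function `h_{j,m}`, with `h_{-1,0} = 1_{[0,1)}`. -/
def haar1 (j : ℤ) (m : ℕ) (x : ℝ) : ℝ :=
  if j = -1 then (if 0 ≤ x ∧ x < 1 then 1 else 0)
  else if (m:ℝ)/2^j.toNat ≤ x ∧ x < ((m:ℝ) + 1/2)/2^j.toNat then 1
  else if ((m:ℝ) + 1/2)/2^j.toNat ≤ x ∧ x < ((m:ℝ)+1)/2^j.toNat then -1
  else 0

/-- `d`-dimensional (tensor product) Haar function. -/
def haarFn (d : ℕ) (j : Fin d → ℤ) (m : Fin d → ℕ) (x : Fin d → ℝ) : ℝ :=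
  ∏ i, haar1 (j i) (m i) (x i)

/-- Haar coefficient `⟨f, h_{j,m}⟩`. -/
def haarCoeff (d : ℕ) (f : (Fin d → ℝ) → ℝ) (j : Fin d → ℤ) (m : Fin d → ℕ) : ℝ :=
  ∫ x in unitCube d, f x * haarFn d j m x

/-- `|j| = max(j₁,0) + ⋯ + max(j_d,0)`. -/
def jnorm (d : ℕ) (j : Fin d → ℤ) : ℕ := ∑ i, (j i).toNat

/-- One-dimensional dyadic interval `I_{j,m}`. -/
def dyadicI (j : ℤ) (m : ℕ) : Set ℝ :=
  Set.Ico ((m:ℝ)/2^j.toNat) (((m:ℝ)+1)/2^j.toNat)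

/-- `d`-dimensional dyadic box `I_{j,m}`. -/
def dyadicBox (d : ℕ) (j : Fin d → ℤ) (m : Fin d → ℕ) : Set (Fin d → ℝ) :=
  Set.univ.pi fun i => dyadicI (j i) (m i)

/-- The index set `𝔻_j` as a finset. -/
def Dfin (d : ℕ) (j : Fin d → ℤ) : Finset (Fin d → ℕ) :=
  Fintype.piFinset fun i => Finset.range (2 ^ (j i).toNat)

/-- The index set `𝔻_j` for `j ∈ ℕ₀^d`. -/
def Dfin0 (d : ℕ) (j : Fin d → ℕ) : Finset (Fin d → ℕ) :=
  Fintype.piFinset fun i => Finset.range (2 ^ (j i))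

/-- Coordinate of the `k`-th point of a digital sequence over `𝔽₂` with generating
matrix `C` (`0`-based rows and columns). -/
def digitalCoord (C : ℕ → ℕ → ZMod 2) (k : ℕ) : ℝ :=
  ∑' i : ℕ,
    (((∑ ℓ ∈ Finset.range (k+1), C i ℓ * (if k.testBit ℓ then 1 else 0)).val : ℕ) : ℝ) / 2 ^ (i + 1)

/-- The digital sequence over `𝔽₂` generated by matrices `C 0, …, C (d-1)`. -/
def digitalSeq (d : ℕ) (C : Fin d → ℕ → ℕ → ZMod 2) : ℕ → Fin d → ℝ :=
  fun k j => digitalCoord (C j) k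

/-- `C 0, …, C (d-1)` generate an order `α` digital `(t,n,d)`-net over `𝔽₂`,
where the relevant submatrices have `q` rows (`q ≥ αn`) and `n` columns.
Row indices are `0`-based; the `1`-based row value of row `r` is `r+1`. -/
def IsOrderNet (α n t q d : ℕ) (C : Fin d → ℕ → ℕ → ZMod 2) : Prop :=
  ∀ (ν : Fin d → ℕ) (r : ∀ j : Fin d, Fin (ν j) → ℕ),
    (∀ j, StrictAnti (r j)) →
    (∀ j l, r j l < q) →
    (∑ j, ∑ l ∈ Finset.univ.filter (fun l : Fin (ν j) => (l:ℕ) < α), (r j l + 1)) ≤ α * n - t →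
    LinearIndependent (ZMod 2)
      (fun p : Σ j : Fin d, Fin (ν j) => fun col : Fin n => C p.1 (r p.1 p.2) col)

/-- `C 0, …, C (d-1)` generate an order `α` digital `(t,d)`-sequence over `𝔽₂`. -/
def IsOrderSeq (α t d : ℕ) (C : Fin d → ℕ → ℕ → ZMod 2) : Prop :=
  ∀ n : ℕ, t < α * n → IsOrderNet α n t (α * n) d C

/-- The condition `e_{i,k,ℓ} = 0` for all `k > 2ℓ` (in `1`-based indexing). -/
def Triangular2 (d : ℕ) (E : Fin d → ℕ → ℕ → ZMod 2) : Prop :=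
  ∀ i k ℓ, 2 * (ℓ + 1) < k + 1 → E i k ℓ = 0

open scoped Classical in
/-- The quantity `λ(U)⁻¹ ∑_{j ∈ ℕ₀^d} 2^{|j|} ∑_{m : I_{j,m} ⊆ U} ⟨f,h_{j,m}⟩²`. -/
def bmoSq (d : ℕ) (f : (Fin d → ℝ) → ℝ) (U : Set (Fin d → ℝ)) : ℝ≥0∞ :=
  (volume U)⁻¹ * ∑' j : Fin d → ℕ, ∑ m ∈ Dfin0 d j,
    if dyadicBox d (fun i => (j i : ℤ)) m ⊆ U then
      (2:ℝ≥0∞) ^ (∑ i, j i) * ENNReal.ofReal ((haarCoeff d f (fun i => (j i : ℤ)) m)^2)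
    else 0

/-- The BMO (semi-)norm `‖f | bmo^d‖`. -/
def bmoNorm (d : ℕ) (f : (Fin d → ℝ) → ℝ) : ℝ≥0∞ :=
  (⨆ U : {U : Set (Fin d → ℝ) // MeasurableSet U ∧ U ⊆ unitCubeIco d ∧ 0 < volume U},
    bmoSq d f U.1) ^ (1/2 : ℝ)

/-- The Orlicz norm of `f` on `[0,1)^d` with respect to the Young function `ψ`,
with the convention `inf ∅ = ∞`. -/
def orliczNorm (d : ℕ) (ψ : ℝ → ℝ) (f : (Fin d → ℝ) → ℝ) : ℝ≥0∞ :=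
  ⨅ K : {K : ℝ // 0 < K ∧ ∫ x in unitCubeIco d, ψ (|f x| / K) ≤ 1}, ENNReal.ofReal K.1

/-- `ψ` is a Young function which coincides with `exp(x^β) - 1` for all large `x`. -/
def IsYoungExp (β : ℝ) (ψ : ℝ → ℝ) : Prop :=
  ConvexOn ℝ (Set.Ici 0) ψ ∧ ψ 0 = 0 ∧ (∀ x : ℝ, 0 < x → 0 < ψ x) ∧
    ∃ x₀ : ℝ, ∀ x ≥ x₀, ψ x = Real.exp (x ^ β) - 1

/-- The set of valid Haar indices `j ∈ ℕ_{-1}^d`. -/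
def validJ (d : ℕ) : Set (Fin d → ℤ) := {j | ∀ i, -1 ≤ j i}

/-- The `q`-th power of the Haar-characterization of the `S^s_{p,q}B` norm:
`∑_{j ∈ ℕ_{-1}^d} 2^{|j|(s-1/p+1)q} (∑_{m ∈ 𝔻_j} |⟨f,h_{j,m}⟩|^p)^{q/p}`. -/
def besovSum (d : ℕ) (p q s : ℝ) (f : (Fin d → ℝ) → ℝ) : ℝ≥0∞ :=
  ∑' j : validJ d,
    ENNReal.ofReal ((2:ℝ) ^ ((jnorm d j.1 : ℝ) * (s - 1/p + 1) * q) *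
      (∑ m ∈ Dfin d j.1, |haarCoeff d f j.1 m| ^ p) ^ (q / p))

/-- Coordinate of the `k`-th point of a digital net with `q × n` generating matrix `C`. -/
def netCoord (q n : ℕ) (C : ℕ → ℕ → ZMod 2) (k : ℕ) : ℝ :=
  ∑ i ∈ Finset.range q,
    ((∑ ℓ ∈ Finset.range n, C i ℓ * (if k.testBit ℓ then 1 else 0)).val : ℝ) / 2 ^ (i + 1)

/-- `n_{μ+1}`, with the convention `n_{r+1} = log₂ N` (indices `1`-based, `n` stored `0`-based). -/
def nExt (r : ℕ) (n : Fin r → ℕ) (N : ℕ) (μ : ℕ) : ℝ :=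
  if h : μ < r then (n ⟨μ, h⟩ : ℝ) else Real.logb 2 N

/-- `n_μ`, with the convention `n_0 = 0` (indices `1`-based, `n` stored `0`-based). -/
def nPrev (r : ℕ) (n : Fin r → ℕ) (μ : ℕ) : ℝ :=
  if h : 1 ≤ μ ∧ μ ≤ r then (n ⟨μ - 1, by omega⟩ : ℝ) else 0

/-- The dyadic square function `Sf`, valued in `ℝ≥0∞`. -/
def sqFnE (d : ℕ) (f : (Fin d → ℝ) → ℝ) (x : Fin d → ℝ) : ℝ≥0∞ :=
  (∑' j : validJ d, ∑ m ∈ Dfin d j.1,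
    ENNReal.ofReal ((2:ℝ) ^ (2 * jnorm d j.1) * (haarCoeff d f j.1 m)^2 *
      (dyadicBox d j.1 m).indicator (fun _ => (1:ℝ)) x)) ^ (1/2 : ℝ)

/-- `sup_{p > 1} p^{-1/β} ‖f‖_{L_p([0,1]^d)}`. -/
def supLp (d : ℕ) (β : ℝ) (f : (Fin d → ℝ) → ℝ) : ℝ≥0∞ :=
  ⨆ p : {p : ℝ // 1 < p},
    ENNReal.ofReal ((p:ℝ) ^ (-(1/β))) * eLpNorm f (ENNReal.ofReal (p:ℝ)) (volume.restrict (unitCube d))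

/-- `‖f | 𝒟₀^d‖² = ∑_{j ∈ ℕ₀^d} 2^{|j|} ∑_{m ∈ 𝔻_j} ⟨f,h_{j,m}⟩²`. -/
def dNormSq (d : ℕ) (f : (Fin d → ℝ) → ℝ) : ℝ≥0∞ :=
  ∑' j : Fin d → ℕ, ∑ m ∈ Dfin0 d j,
    ENNReal.ofReal ((2:ℝ) ^ (∑ i, j i) * (haarCoeff d f (fun i => (j i : ℤ)) m)^2)

/-- `‖f | 𝒟₀^d‖`. -/
def dNorm (d : ℕ) (f : (Fin d → ℝ) → ℝ) : ℝ≥0∞ := (dNormSq d f) ^ (1/2 : ℝ)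


lemma cww_second_diff (w t M : ℝ) (hw : |w| ≤ M) (ht : |t| ≤ M) (k : ℕ) :
    |(w+t)^k + (w-t)^k - 2*w^k| * M^2 ≤ t^2 * 4^k * M^k ∧
    |t * ((w+t)^k - (w-t)^k)| * M ≤ t^2 * 4^k * M^k := by
  have hM : 0 ≤ M := le_trans (abs_nonneg _) hw
  induction k with
  | zero => constructor <;> norm_num <;> positivity
  | succ k ih =>
    obtain ⟨h1, h2⟩ := ih
    set D := (w+t)^k + (w-t)^k - 2*w^k with hD
    set E := t * ((w+t)^k - (w-t)^k) with hE
    have hwk : |w^k| ≤ M^k := by rw [abs_pow]; gcongr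
    have e1 : (w+t)^(k+1) + (w-t)^(k+1) - 2*w^(k+1) = w * D + E := by
      rw [hD, hE]; ring
    have e2 : t * ((w+t)^(k+1) - (w-t)^(k+1)) = w * E + t^2 * (D + 2 * w^k) := by
      rw [hD, hE]; ring
    have ht2 : t^2 ≤ M^2 := by rw [← sq_abs t]; gcongr
    have h4 : (1:ℝ) ≤ 4^k := one_le_pow₀ (by norm_num)
    have hMk : 0 ≤ M^k := by positivity
    have hz : 0 ≤ t^2 * 4^k * M^k := by positivity
    constructor
    · rw [e1]
      calc |w * D + E| * M^2 ≤ (|w| * |D| + |E|) * M^2 := by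
            gcongr; rw [← abs_mul]; exact abs_add_le _ _
        _ ≤ (M * |D| + |E|) * M^2 := by gcongr
        _ = M * (|D| * M^2) + M * (|E| * M) := by ring
        _ ≤ M * (t^2 * 4^k * M^k) + M * (t^2 * 4^k * M^k) := by gcongr
        _ ≤ t^2 * 4^(k+1) * M^(k+1) := by
            have : 0 ≤ M * (t^2 * 4^k * M^k) := by positivity
            calc _ = 2 * (M * (t^2 * 4^k * M^k)) := by ring
              _ ≤ 4 * (M * (t^2 * 4^k * M^k)) := by linarith
              _ = _ := by ring
    · rw [e2]
      calc |w * E + t^2 * (D + 2 * w^k)| * M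
          ≤ (|w| * |E| + t^2 * (|D| + 2 * |w^k|)) * M := by
            gcongr
            refine (abs_add_le _ _).trans ?_
            rw [abs_mul w E, abs_mul (t^2), abs_of_nonneg (sq_nonneg t)]
            gcongr
            refine (abs_add_le _ _).trans ?_
            rw [abs_mul]; simp
        _ ≤ (M * |E| + t^2 * (|D| + 2 * M^k)) * M := by gcongr
        _ = M * (|E| * M) + (t^2 * |D|) * M + 2 * M * (t^2 * M^k) := by ring
        _ ≤ M * (t^2 * 4^k * M^k) + (M^2 * |D|) * M + 2 * M * (t^2 * M^k * 4^k) := by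
            have : t^2 * M^k ≤ t^2 * M^k * 4^k := le_mul_of_one_le_right (by positivity) h4
            gcongr
        _ = M * (t^2 * 4^k * M^k) + M * (|D| * M^2) + 2 * M * (t^2 * M^k * 4^k) := by ring
        _ ≤ M * (t^2 * 4^k * M^k) + M * (t^2 * 4^k * M^k) + 2 * M * (t^2 * M^k * 4^k) := by gcongr
        _ = _ := by ring

def cwwB (k : ℕ) : ℝ := (32 * k)^k * (2 * 4^k + 16 * k * k)

set_option maxHeartbeats 1600000 in
/-- the key pointwise inequality -/
lemma cww_step (k : ℕ) (hk : 1 ≤ k) (X y H t : ℝ) (hX : 0 ≤ X) (hy : 0 ≤ y) (hH : 0 ≤ H)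
    (ht : t^2 ≤ 4 * X * H) :
    (X + t + H - 16 * k * (y + H))^k + (X - t + H - 16 * k * (y + H))^k
      - 2 * (cwwB k * (y + H)^k) ≤ 2 * ((X - 16 * k * y)^k - cwwB k * y^k) := by
  have hk' : (1:ℝ) ≤ k := by exact_mod_cast hk
  set a : ℝ := 16 * k with ha
  have ha16 : 16 ≤ a := by linarith
  have hB : 0 ≤ cwwB k := by unfold cwwB; positivity
  set Y := y + H with hY
  set z := X - a * y with hz
  set w := X + H - a * Y with hw
  have e1 : X + t + H - a * Y = w + t := by rw [hw]; ring
  have e2 : X - t + H - a * Y = w - t := by rw [hw]; ring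
  have ezw : z = w + (a - 1) * H := by rw [hw, hz, hY]; ring
  rw [e1, e2]
  have hYy : y^k ≤ Y^k := by gcongr; linarith
  rcases le_or_gt (2 * a * Y) X with hc | hc
  · skip
    rcases hX.eq_or_lt with hX0 | hXpos
    · have hY0 : Y = 0 := by
        have : 0 ≤ Y := by positivity
        nlinarith
      have hy0 : y = 0 := by linarith
      have hH0 : H = 0 := by linarith
      have ht0 : t = 0 := by
        have : t^2 ≤ 0 := by rw [hH0] at ht; linarith
        nlinarith
      have : w = z := by rw [ezw, hH0]; ring
      rw [this, ht0, hY0, hy0]; simp; linarith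
    have hwX : X / 2 ≤ w := by rw [hw]; nlinarith
    have hw0 : 0 < w := by linarith
    have hHX : 2 * a * H ≤ X := by
      refine le_trans ?_ hc
      gcongr; linarith
    have hHw : a * H ≤ w := by linarith
    have htw : |t| ≤ w := by
      apply abs_le_of_sq_le_sq _ hw0.le
      nlinarith
    have ⟨htw1, htw2⟩ := abs_le.mp htw
    have key : w * Real.exp (k * (t/w)^2 / 2) ≤ z := by
      have h1 : k * (t/w)^2 / 2 ≤ 4 * k * H / w := by
        rw [div_pow, div_le_div_iff₀ (by norm_num) hw0]
        have : (k:ℝ) * (t^2/w^2) * w = k * t^2 / w := by field_simp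
        rw [this, div_le_iff₀ hw0]
        have : t^2 ≤ 8 * H * w := by nlinarith
        nlinarith
      have h2 : 4 * k * H / w ≤ 1 := by
        rw [div_le_one hw0]; nlinarith
      have h0 : 0 ≤ 4 * k * H / w := by positivity
      have h3 : Real.exp (4 * k * H / w) ≤ 1 + 2 * (4 * k * H / w) := by
        have := Real.abs_exp_sub_one_le (x := 4 * k * H / w) (by rwa [abs_of_nonneg h0])
        rw [abs_of_nonneg h0] at this
        linarith [le_abs_self (Real.exp (4 * k * H / w) - 1)]
      calc w * Real.exp (k * (t/w)^2 / 2) ≤ w * (1 + 2 * (4 * k * H / w)) := by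
            gcongr; exact (Real.exp_le_exp.mpr h1).trans h3
        _ = w + 8 * k * H := by field_simp; try ring
        _ ≤ z := by rw [ezw]; nlinarith
    have p1 : (w+t)^k ≤ w^k * Real.exp (k * (t/w)) := by
      have : w + t ≤ w * Real.exp (t/w) := by
        have := Real.add_one_le_exp (t/w)
        calc w + t = w * (t/w + 1) := by field_simp; try ring
          _ ≤ _ := by gcongr
      calc (w+t)^k ≤ (w * Real.exp (t/w))^k := by gcongr; linarith
        _ = _ := by rw [mul_pow, ← Real.exp_nat_mul]
    have p2 : (w-t)^k ≤ w^k * Real.exp (-(k * (t/w))) := by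
      have : w - t ≤ w * Real.exp (-(t/w)) := by
        have := Real.add_one_le_exp (-(t/w))
        calc w - t = w * (-(t/w) + 1) := by field_simp; try ring
          _ ≤ _ := by gcongr
      calc (w-t)^k ≤ (w * Real.exp (-(t/w)))^k := by gcongr; try linarith
        _ = _ := by rw [mul_pow, ← Real.exp_nat_mul]; ring_nf
    have p3 : (w+t)^k + (w-t)^k ≤ 2 * z^k := by
      have hc := Real.cosh_le_exp_half_sq (k * (t/w))
      rw [Real.cosh_eq] at hc
      calc (w+t)^k + (w-t)^k ≤ 2 * (w^k * Real.exp ((k * (t/w))^2/2)) := by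
            have := mul_le_mul_of_nonneg_left hc (pow_nonneg hw0.le k)
            linarith
        _ = 2 * (w * Real.exp (k * (t/w)^2 / 2))^k := by
            rw [mul_pow w, ← Real.exp_nat_mul]; ring_nf
        _ ≤ _ := by gcongr
    nlinarith
  · skip
    have hYpos : 0 < Y := by
      by_contra h
      nlinarith
    set M := 2 * a * Y with hM
    have hMpos : 0 < M := by positivity
    have hyY : y ≤ Y := by linarith
    have hHY : H ≤ Y := by linarith
    have haY : 16 * Y ≤ a * Y := by gcongr
    have hay : a * y ≤ a * Y := by gcongr
    have hay0 : 0 ≤ a * y := by positivity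
    have hwM : |w| ≤ M := by
      rw [abs_le]; constructor <;> linarith
    have hzM : |z| ≤ M := by
      rw [abs_le]; constructor <;> linarith
    have ht4 : t^2 ≤ 4 * M * H := by
      refine ht.trans ?_; gcongr
    have htM : |t| ≤ M := by
      apply abs_le_of_sq_le_sq _ hMpos.le
      calc t^2 ≤ M * (4 * H) := by linarith
        _ ≤ M * M := by gcongr; linarith
        _ = M^2 := by ring
    obtain ⟨hD, -⟩ := cww_second_diff w t M hwM htM k
    have hD' : |(w+t)^k + (w-t)^k - 2*w^k| * M ≤ 4 * H * 4^k * M^k := by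
      have : |(w+t)^k + (w-t)^k - 2*w^k| * M^2 ≤ (4 * M * H) * 4^k * M^k := by
        refine hD.trans ?_; gcongr
      have h2 : (|(w+t)^k + (w-t)^k - 2*w^k| * M) * M ≤ (4 * H * 4^k * M^k) * M := by
        linarith
      exact le_of_mul_le_mul_right h2 hMpos
    have hP : (w^k - z^k) * M ≤ a * H * k * M^k := by
      have h := abs_pow_sub_pow_le w z k
      have h1 : |w - z| ≤ a * H := by
        rw [ezw, abs_le]; constructor <;> nlinarith
      calc (w^k - z^k) * M ≤ (a * H * k * M^(k-1)) * M := by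
            gcongr
            refine (le_abs_self _).trans (h.trans ?_)
            gcongr
            exact max_le hwM hzM
        _ = a * H * k * (M^(k-1) * M) := by ring
        _ = _ := by rw [← pow_succ, Nat.sub_add_cancel hk]
    have hQ : H * Y^k ≤ Y * (Y^k - y^k) := by
      obtain ⟨r, rfl⟩ : ∃ r, k = r + 1 := ⟨k - 1, by omega⟩
      have : y^(r+1) ≤ Y^r * y := by rw [pow_succ]; gcongr
      have h3 : H * Y^r ≤ Y^(r+1) - y^(r+1) := by
        have : H * Y^r = Y^(r+1) - Y^r * y := by rw [hY]; ring
        linarith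
      calc H * Y^(r+1) = Y * (H * Y^r) := by ring
        _ ≤ _ := by gcongr
    have hMk : M^k = (32 * k)^k * Y^k := by rw [hM, ha, ← mul_pow]; ring_nf
    have main : ((w+t)^k + (w-t)^k - 2 * z^k) * M ≤ (2 * (cwwB k * (Y^k - y^k))) * M := by
      calc ((w+t)^k + (w-t)^k - 2 * z^k) * M
          = ((w+t)^k + (w-t)^k - 2*w^k) * M + 2 * ((w^k - z^k) * M) := by ring
        _ ≤ 4 * H * 4^k * M^k + 2 * (a * H * k * M^k) := by
            have := (mul_le_mul_of_nonneg_right (le_abs_self ((w+t)^k + (w-t)^k - 2*w^k)) hMpos.le).trans hD'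
            linarith
        _ = 2 * (cwwB k * (H * Y^k)) := by
            rw [hMk]; unfold cwwB; ring
        _ ≤ 2 * (cwwB k * (Y * (Y^k - y^k))) := by gcongr
        _ = (2 * (cwwB k * (Y^k - y^k))) * Y := by ring
        _ ≤ _ := by
            have : 0 ≤ Y^k - y^k := by linarith
            have h2 : Y ≤ M := by linarith
            gcongr
    have := le_of_mul_le_mul_right main hMpos
    linarith

def cwwK (k : ℕ) : ℝ := (5120 * k)^k

lemma cww_final (k : ℕ) (hk : 1 ≤ k) (X y : ℝ) (hX : 0 ≤ X) (hy : 0 ≤ y) :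
    X^k ≤ 2^k * ((X - 16 * k * y)^k - cwwB k * y^k) + cwwK k * y^k := by
  have hk' : (1:ℝ) ≤ k := by exact_mod_cast hk
  have hK : 2^k * cwwB k + 2 * (32*k)^k ≤ cwwK k := by
    have h4 : (k:ℝ) * k ≤ 4^k := by
      have : k < 2^k := Nat.lt_two_pow_self
      have h' : (k:ℝ) ≤ 2^k := by exact_mod_cast this.le
      calc (k:ℝ) * k ≤ 2^k * 2^k := by gcongr
        _ = 4^k := by rw [← mul_pow]; norm_num
    have h8 : (1:ℝ) ≤ 8^k := one_le_pow₀ (by norm_num)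
    have h20 : (20:ℝ) ≤ 20^k := le_self_pow₀ (by norm_num) (by omega)
    unfold cwwB cwwK
    calc (2:ℝ)^k * ((32*k)^k * (2*4^k + 16*k*k)) + 2*(32*k)^k
        = (32*k)^k * (2^k * (2 * 4^k + 16 * (k*k)) + 2) := by ring
      _ ≤ (32*k)^k * (2^k * (2 * 4^k + 16 * 4^k) + 2 * 8^k) := by gcongr; linarith
      _ = (32*k)^k * (18 * (2^k * 4^k) + 2 * 8^k) := by ring
      _ = (32*k)^k * (20 * 8^k) := by rw [← mul_pow]; norm_num; ring
      _ ≤ (32*k)^k * (20^k * 8^k) := by gcongr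
      _ = _ := by rw [← mul_pow, ← mul_pow]; ring_nf
  have hyk : 0 ≤ y^k := by positivity
  have hmain : X^k ≤ 2^k * (X - 16*k*y)^k + 2 * (32*k)^k * y^k := by
    have e : ((32:ℝ)*k)^k * y^k = 2^k * (16*k*y)^k := by
      rw [← mul_pow, ← mul_pow]; ring_nf
    rcases le_or_gt (32 * k * y) X with h | h
    · have : X^k ≤ (2 * (X - 16*k*y))^k := by gcongr; linarith
      rw [mul_pow] at this
      have h0 : 0 ≤ 2 * (32*(k:ℝ))^k * y^k := by positivity
      linarith
    · have h1 : X^k ≤ (32*k*y)^k := by gcongr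
      have h2 : |(X - 16*k*y)^k| ≤ (16*k*y)^k := by
        rw [abs_pow]; gcongr
        rw [abs_le]; constructor <;> linarith
      have h3 := mul_le_mul_of_nonneg_left (neg_le_of_abs_le h2) (pow_nonneg (zero_le_two (α := ℝ)) k)
      rw [mul_pow] at h1
      linarith
  nlinarith

lemma cww_sum_range_two_mul (N : ℕ) (g : ℕ → ℝ) :
    ∑ q ∈ Finset.range (2 * N), g q = ∑ q ∈ Finset.range N, (g (2*q) + g (2*q+1)) := by
  induction N with
  | zero => simp
  | succ N ih =>
    rw [show 2 * (N+1) = 2*N + 1 + 1 by ring, Finset.sum_range_succ, Finset.sum_range_succ, ih,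
      Finset.sum_range_succ]
    ring

def cwwf {V : Type} [NormedAddCommGroup V] [InnerProductSpace ℝ V] (v : ℕ → ℕ → V) (M q : ℕ) : V :=
  ∑ l ∈ Finset.range (M+1), ((-1:ℝ)^(q / 2^(M-l))) • v l (q / 2^(M+1-l))

def cwwY {V : Type} [NormedAddCommGroup V] [InnerProductSpace ℝ V] (v : ℕ → ℕ → V) (M q : ℕ) : ℝ :=
  ∑ l ∈ Finset.range (M+1), ‖v l (q / 2^(M+1-l))‖^2

section
variable {V : Type} [NormedAddCommGroup V] [InnerProductSpace ℝ V]

lemma cww_div_aux (q e r : ℕ) (he : e < 2) : (2*q+e) / 2^(r+1) = q / 2^r := by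
  rw [pow_succ', ← Nat.div_div_eq_div_mul]
  congr 1; omega

lemma cwwf_succ (v : ℕ → ℕ → V) (M q e : ℕ) (he : e < 2) :
    cwwf v (M+1) (2*q+e) = cwwf v M q + ((-1:ℝ)^e) • v (M+1) q := by
  unfold cwwf
  rw [Finset.sum_range_succ]
  congr 1
  · apply Finset.sum_congr rfl
    intro l hl
    have hl' : l ≤ M := by simpa [Nat.lt_succ_iff] using hl
    rw [show M + 1 - l = (M - l) + 1 by omega, show M + 1 + 1 - l = (M - l + 1) + 1 by omega,
      cww_div_aux _ _ _ he, cww_div_aux _ _ _ he]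
  · have := cww_div_aux q e 0 he
    simp only [Nat.sub_self, pow_zero, Nat.div_one, zero_add, pow_one] at this ⊢
    rw [show M + 1 + 1 - (M+1) = 1 by omega, pow_one, this, pow_add, pow_mul]
    simp

lemma cwwY_succ (v : ℕ → ℕ → V) (M q e : ℕ) (he : e < 2) :
    cwwY v (M+1) (2*q+e) = cwwY v M q + ‖v (M+1) q‖^2 := by
  unfold cwwY
  rw [Finset.sum_range_succ]
  congr 1
  · apply Finset.sum_congr rfl
    intro l hl
    have hl' : l ≤ M := by simpa [Nat.lt_succ_iff] using hl
    rw [show M + 1 - l = (M - l) + 1 by omega, show M + 1 + 1 - l = (M - l + 1) + 1 by omega,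
      cww_div_aux _ _ _ he]
  · have := cww_div_aux q e 0 he
    simp only [pow_zero, Nat.div_one, zero_add, pow_one] at this ⊢
    rw [show M + 1 + 1 - (M+1) = 1 by omega, pow_one, this]

def cwwU (k : ℕ) (X y : ℝ) : ℝ := (X - 16 * k * y)^k - cwwB k * y^k

lemma cwwY_nonneg (v : ℕ → ℕ → V) (M q : ℕ) : 0 ≤ cwwY v M q := by
  unfold cwwY; positivity

lemma cwwU_sum (k : ℕ) (hk : 1 ≤ k) (v : ℕ → ℕ → V) (M : ℕ) :
    ∑ q ∈ Finset.range (2^M), cwwU k (‖cwwf v M q‖^2) (cwwY v M q) ≤ 0 := by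
  induction M with
  | zero =>
    have hk0 : k ≠ 0 := by omega
    have := cww_step k hk 0 0 (‖v 0 0‖^2) 0 le_rfl le_rfl (by positivity) (by simp)
    simp [cwwf, cwwY, cwwU, hk0] at this ⊢
    linarith
  | succ M ih =>
    rw [pow_succ', cww_sum_range_two_mul]
    refine le_trans (b := ∑ q ∈ Finset.range (2^M), 2 * cwwU k (‖cwwf v M q‖^2) (cwwY v M q)) ?_ ?_
    · apply Finset.sum_le_sum
      intro q _
      have f0 := cwwf_succ v M q 0 (by norm_num)
      have f1 := cwwf_succ v M q 1 (by norm_num)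
      have y0 := cwwY_succ v M q 0 (by norm_num)
      have y1 := cwwY_succ v M q 1 (by norm_num)
      rw [add_zero] at f0 y0
      rw [f0, f1, y0, y1]
      set x := cwwf v M q
      set h := v (M+1) q
      simp only [pow_zero, pow_one, one_smul, neg_smul, ← sub_eq_add_neg]
      rw [norm_add_sq_real, norm_sub_sq_real]
      have hs : (2 * inner ℝ x h)^2 ≤ 4 * ‖x‖^2 * ‖h‖^2 := by
        have := abs_real_inner_le_norm x h
        calc (2 * inner ℝ x h)^2 = 4 * |inner ℝ x h|^2 := by rw [sq_abs]; ring
          _ ≤ 4 * (‖x‖ * ‖h‖)^2 := by gcongr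
          _ = _ := by ring
      have := cww_step k hk (‖x‖^2) (cwwY v M q) (‖h‖^2) (2 * inner ℝ x h) (by positivity)
        (cwwY_nonneg _ _ _) (by positivity) hs
      unfold cwwU
      linarith
    · rw [← Finset.mul_sum]; linarith

lemma cww_oneD (k : ℕ) (hk : 1 ≤ k) (v : ℕ → ℕ → V) (M : ℕ) :
    ∑ q ∈ Finset.range (2^M), (‖cwwf v M q‖^2)^k ≤
      cwwK k * ∑ q ∈ Finset.range (2^M), (cwwY v M q)^k := by
  calc _ ≤ ∑ q ∈ Finset.range (2^M), (2^k * cwwU k (‖cwwf v M q‖^2) (cwwY v M q)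
        + cwwK k * (cwwY v M q)^k) := by
        apply Finset.sum_le_sum
        intro q _
        exact cww_final k hk _ _ (by positivity) (cwwY_nonneg _ _ _)
    _ ≤ _ := by
      rw [Finset.sum_add_distrib, ← Finset.mul_sum, ← Finset.mul_sum]
      have := mul_nonpos_of_nonneg_of_nonpos (pow_nonneg (zero_le_two (α := ℝ)) k)
        (cwwU_sum k hk v M)
      linarith

lemma cww_oneD_fin (k : ℕ) (hk : 1 ≤ k) (M : ℕ) (v : Fin (M+1) → ℕ → V) :
    ∑ q : Fin (2^M), (‖∑ l : Fin (M+1), ((-1:ℝ)^((q:ℕ) / 2^(M-(l:ℕ)))) •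
        v l ((q:ℕ) / 2^(M+1-(l:ℕ)))‖^2)^k ≤
      cwwK k * ∑ q : Fin (2^M), (∑ l : Fin (M+1), ‖v l ((q:ℕ) / 2^(M+1-(l:ℕ)))‖^2)^k := by
  have := cww_oneD k hk (fun l m => if h : l < M+1 then v ⟨l, h⟩ m else 0) M
  rw [← Fin.sum_univ_eq_sum_range (fun q => (‖cwwf _ M q‖^2)^k),
    ← Fin.sum_univ_eq_sum_range (fun q => (cwwY _ M q)^k)] at this
  unfold cwwf cwwY at this
  simp only [Finset.sum_range, Fin.is_lt, dif_pos, Fin.eta] at this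
  exact this
end

/-- sign of level `l` at grid point `q`. -/
def cwwSg (M l q : ℕ) : ℝ := (-1:ℝ)^(q / 2^(M-l))
/-- position of level `l` at grid point `q`. -/
def cwwPos (M l q : ℕ) : ℕ := q / 2^(M+1-l)

lemma cww_multi (k : ℕ) (hk : 1 ≤ k) (M : ℕ) (s : ℕ) :
    ∀ (V : Type) [NormedAddCommGroup V] [InnerProductSpace ℝ V]
      (A : (Fin s → Fin (M+1)) → (Fin s → ℕ) → V),
    ∑ q : Fin s → Fin (2^M), (‖∑ l : Fin s → Fin (M+1), (∏ i, cwwSg M (l i) (q i)) •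
        A l (fun i => cwwPos M (l i) (q i))‖^2)^k ≤
      (cwwK k)^s * ∑ q : Fin s → Fin (2^M),
        (∑ l : Fin s → Fin (M+1), ‖A l (fun i => cwwPos M (l i) (q i))‖^2)^k := by
  have hK : 0 ≤ cwwK k := by unfold cwwK; positivity
  induction s with
  | zero =>
    intro V _ _ A
    simp
  | succ s ih =>
    intro V _ _ A
    have reQ : ∀ G : (Fin (s+1) → Fin (2^M)) → ℝ, ∑ q, G q =
        ∑ q' : Fin s → Fin (2^M), ∑ q0 : Fin (2^M), G (Fin.cons q0 q') := by
      intro G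
      rw [← (Fin.consEquiv (fun _ => Fin (2^M))).sum_comp, Fintype.sum_prod_type, Finset.sum_comm]
      rfl
    have reLV : ∀ (G : (Fin (s+1) → Fin (M+1)) → V), ∑ q, G q =
        ∑ l0, ∑ l', G (Fin.cons l0 l') := by
      intro G
      rw [← (Fin.consEquiv (fun _ => Fin (M+1))).sum_comp, Fintype.sum_prod_type]
      rfl
    have reLR : ∀ (G : (Fin (s+1) → Fin (M+1)) → ℝ), ∑ q, G q =
        ∑ l0, ∑ l', G (Fin.cons l0 l') := by
      intro G
      rw [← (Fin.consEquiv (fun _ => Fin (M+1))).sum_comp, Fintype.sum_prod_type]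
      rfl
    have hpos : ∀ (l0 : Fin (M+1)) (l' : Fin s → Fin (M+1)) (q0 : Fin (2^M)) (q' : Fin s → Fin (2^M)),
        (fun i : Fin (s+1) => cwwPos M (Fin.cons (α := fun _ => Fin (M+1)) l0 l' i : Fin (M+1))
          (Fin.cons (α := fun _ => Fin (2^M)) q0 q' i : Fin (2^M))) =
        Fin.cons (α := fun _ => ℕ) (cwwPos M l0 q0) (fun i => cwwPos M (l' i) (q' i)) := by
      intro l0 l' q0 q'
      funext i
      refine Fin.cases ?_ (fun i => ?_) i <;> simp
    rw [reQ, reQ]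
    simp only [reLV, reLR, hpos, Fin.prod_univ_succ, Fin.cons_zero, Fin.cons_succ, mul_smul,
      ← Finset.smul_sum]
    have step1 : ∀ q' : Fin s → Fin (2^M), _ := fun q' => cww_oneD_fin k hk M
      (fun l0 m0 => ∑ l' : Fin s → Fin (M+1), (∏ i, cwwSg M (l' i) (q' i)) •
        A (Fin.cons l0 l') (Fin.cons (α := fun _ => ℕ) m0 (fun i => cwwPos M (l' i) (q' i))))
    refine (Finset.sum_le_sum (fun q' _ => step1 q')).trans ?_
    rw [← Finset.mul_sum, pow_succ', mul_assoc]
    refine mul_le_mul_of_nonneg_left ?_ hK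
    rw [Finset.sum_comm, Finset.sum_comm (s := (Finset.univ : Finset (Fin s → Fin (2^M)))),
      Finset.mul_sum]
    refine Finset.sum_le_sum (fun q0 _ => ?_)
    have step2 := ih (PiLp 2 (fun _ : Fin (M+1) => V))
      (fun l' m' => WithLp.toLp 2 (fun l0 : Fin (M+1) => A (Fin.cons l0 l')
        (Fin.cons (α := fun _ => ℕ) (cwwPos M l0 q0) m')))
    simp only [PiLp.norm_sq_eq_of_L2] at step2
    simp only [WithLp.ofLp_sum, WithLp.ofLp_smul, Finset.sum_apply, Pi.smul_apply] at step2
    refine le_trans (le_of_eq ?_) (step2.trans (le_of_eq ?_))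
    · rfl
    · congr 1
      refine Finset.sum_congr rfl (fun q' _ => ?_)
      rw [Finset.sum_comm]

lemma cww_exp_avg {ι : Type} [Fintype ι] [Nonempty ι] (s : ℕ) (hs : 1 ≤ s) (u : ι → ℝ)
    (hu : ∀ i, 0 ≤ u i)
    (h : ∀ k : ℕ, 1 ≤ k → ∑ i, (u i ^ s)^k ≤ Fintype.card ι * (((k:ℝ)/6)^k)^s) :
    ∑ i, Real.exp (u i) ≤ 2 * Fintype.card ι := by
  set N : ℝ := (Fintype.card ι : ℝ) with hN
  have hN0 : 0 < N := by rw [hN]; exact_mod_cast Fintype.card_pos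
  have key : ∀ k : ℕ, ∑ i, u i ^ k / (k.factorial : ℝ) ≤ N * (1/2)^k := by
    intro k
    rcases Nat.eq_zero_or_pos k with rfl | hk
    · simp [hN]
    have h1 : (∑ i, (1/N) * u i ^ k)^s ≤ ∑ i, (1/N) * (u i ^ k)^s := by
      apply Real.pow_arith_mean_le_arith_mean_pow
      · intro i _; positivity
      · simp [hN, Finset.card_univ]
      · intro i _; exact pow_nonneg (hu i) k
    have h2 : ∑ i, (1/N) * (u i ^ k)^s ≤ (((k:ℝ)/6)^k)^s := by
      rw [← Finset.mul_sum, one_div, inv_mul_le_iff₀ hN0]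
      refine le_trans (le_of_eq (Finset.sum_congr rfl fun i _ => ?_)) (h k hk)
      rw [← pow_mul, ← pow_mul, mul_comm]
    have h3 : ∑ i, (1/N) * u i ^ k ≤ ((k:ℝ)/6)^k :=
      le_of_pow_le_pow_left₀ (by omega) (by positivity) (h1.trans h2)
    rw [← Finset.mul_sum, one_div, inv_mul_le_iff₀ hN0] at h3
    rw [← Finset.sum_div]
    have hf : (0:ℝ) < k.factorial := by exact_mod_cast k.factorial_pos
    rw [div_le_iff₀ hf]
    refine h3.trans ?_
    rw [mul_assoc]
    refine mul_le_mul_of_nonneg_left ?_ hN0.le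
    have h4 := Real.pow_div_factorial_le_exp (k:ℝ) (by positivity) k
    rw [div_le_iff₀ hf] at h4
    have h5 : Real.exp (k:ℝ) ≤ 3^k := by
      rw [← Real.exp_one_pow]
      gcongr
      linarith [Real.exp_one_lt_d9]
    calc ((k:ℝ)/6)^k = (k:ℝ)^k * (1/6)^k := by rw [← mul_pow]; ring_nf
      _ ≤ (Real.exp k * k.factorial) * (1/6)^k := by gcongr
      _ ≤ (3^k * k.factorial) * (1/6)^k := by gcongr
      _ = (3^k * (1/6)^k) * k.factorial := by ring
      _ = _ := by rw [← mul_pow]; norm_num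
  have hs1 : HasSum (fun k : ℕ => ∑ i, u i ^ k / (k.factorial : ℝ)) (∑ i, Real.exp (u i)) := by
    apply hasSum_sum
    intro i _
    rw [Real.exp_eq_exp_ℝ]
    exact NormedSpace.expSeries_div_hasSum_exp (u i)
  have hs2 : HasSum (fun k : ℕ => N * (1/2:ℝ)^k) (N * 2) := hasSum_geometric_two.mul_left N
  have := hasSum_le key hs1 hs2
  linarith

lemma cww_orlicz (s : ℕ) (hs : 1 ≤ s) (ψ : ℝ → ℝ) (hψ : IsYoungExp (2 / (s:ℝ)) ψ) :
    ∃ C : ℝ, 0 < C ∧ ∀ (ι : Type) [Fintype ι] [Nonempty ι] (g : ι → ℝ), (∀ i, 0 ≤ g i) →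
      (∀ k : ℕ, 1 ≤ k → ∑ i, (g i ^ 2)^k ≤ Fintype.card ι * ((10240 * (k:ℝ))^k)^s) →
      ∑ i, ψ (g i / C) ≤ Fintype.card ι := by
  obtain ⟨hconv, h0, hpos, x₀, hx₀⟩ := hψ
  set x1 := max x₀ 0 with hx1
  have hx1' : 0 ≤ x1 := le_max_right _ _
  have hψ0 : ∀ x, 0 ≤ x → 0 ≤ ψ x := by
    intro x hx
    rcases hx.eq_or_lt with rfl | hx
    · exact h0.ge
    · exact (hpos x hx).le
  have hscale : ∀ (r x : ℝ), 0 ≤ r → r ≤ 1 → 0 ≤ x → ψ (r * x) ≤ r * ψ x := by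
    intro r x hr hr1 hx
    have := hconv.2 (x := x) (y := 0) hx (by simp) hr (sub_nonneg.mpr hr1) (by ring)
    simpa [h0] using this
  have hbd : ∀ x, 0 ≤ x → ψ x ≤ ψ x1 + Real.exp (x ^ (2/(s:ℝ))) := by
    intro x hx
    rcases le_or_gt x1 x with h | h
    · rw [hx₀ x (le_trans (le_max_left _ _) h)]
      have := hψ0 x1 hx1'
      linarith
    · have hx1p : 0 < x1 := lt_of_le_of_lt hx h
      have := hscale (x/x1) x1 (by positivity) ((div_le_one hx1p).mpr h.le) hx1'
      rw [div_mul_cancel₀ _ hx1p.ne'] at this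
      have h2 : x / x1 * ψ x1 ≤ 1 * ψ x1 :=
        mul_le_mul_of_nonneg_right ((div_le_one hx1p).mpr h.le) (hψ0 _ hx1')
      have := Real.exp_pos (x ^ (2/(s:ℝ)))
      linarith
  set D := ψ x1 + 2 with hD
  have hD2 : 2 ≤ D := by have := hψ0 x1 hx1'; linarith
  set c0 : ℝ := Real.sqrt ((1/(6*10240))^s) with hc0
  have hc0p : 0 < c0 := Real.sqrt_pos.mpr (by positivity)
  have hc02 : c0^2 = (1/(6*10240))^s := Real.sq_sqrt (by positivity)
  refine ⟨D / c0, by positivity, ?_⟩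
  intro ι _ _ g hg hm
  have hs0 : (s:ℝ) ≠ 0 := by positivity
  have hexp := cww_exp_avg s hs (fun i => (c0 * g i) ^ (2/(s:ℝ)))
    (fun i => Real.rpow_nonneg (mul_nonneg hc0p.le (hg i)) _) (by
      intro k hk
      have e : ∀ i, (((c0 * g i) ^ (2/(s:ℝ)))^s)^k = (c0^2)^k * (g i ^ 2)^k := by
        intro i
        rw [← Real.rpow_natCast _ s, ← Real.rpow_mul (mul_nonneg hc0p.le (hg i)),
          div_mul_cancel₀ _ hs0, ← mul_pow, ← mul_pow]
        norm_num
      simp only [e]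
      rw [← Finset.mul_sum]
      calc (c0^2)^k * ∑ i, (g i ^ 2)^k
          ≤ (c0^2)^k * (Fintype.card ι * ((10240 * (k:ℝ))^k)^s) := by
            gcongr; exact hm k hk
        _ = Fintype.card ι * (((1/(6*10240))^s)^k * ((10240 * (k:ℝ))^k)^s) := by
            rw [hc02]; ring
        _ = _ := by
            rw [pow_right_comm, ← mul_pow, ← mul_pow]
            congr 3; ring)
  calc ∑ i, ψ (g i / (D/c0)) ≤ ∑ i, (1/D) * (ψ x1 + Real.exp ((c0 * g i) ^ (2/(s:ℝ)))) := by
        apply Finset.sum_le_sum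
        intro i _
        have e : g i / (D/c0) = (1/D) * (c0 * g i) := by field_simp
        rw [e]
        have hgi : 0 ≤ c0 * g i := mul_nonneg hc0p.le (hg i)
        refine (hscale _ _ (by positivity) (by rw [div_le_one (by positivity)]; linarith) hgi).trans ?_
        gcongr
        exact hbd _ hgi
    _ = (1/D) * (Fintype.card ι * ψ x1 + ∑ i, Real.exp ((c0 * g i) ^ (2/(s:ℝ)))) := by
        rw [← Finset.mul_sum, Finset.sum_add_distrib]; simp
    _ ≤ (1/D) * (Fintype.card ι * ψ x1 + 2 * Fintype.card ι) := by gcongr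
    _ = Fintype.card ι := by rw [hD]; have : ψ x1 + 2 ≠ 0 := by linarith
                             field_simp

lemma cww_disc (s M n : ℕ) (a : (Fin (s+1) → Fin (M+1)) → (Fin (s+1) → ℕ) → ℝ)
    (ha : ∀ l m, a l m ≠ 0 → ∑ i, ((l i : ℕ) - 1) = n) (B : ℝ)
    (hB : ∀ q : Fin (s+1) → Fin (2^M), ∑ l, (a l (fun i => cwwPos M (l i) (q i)))^2 ≤ B)
    (k : ℕ) (hk : 1 ≤ k) :
    ∑ q : Fin (s+1) → Fin (2^M), ((∑ l, (∏ i, cwwSg M (l i) (q i)) *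
        a l (fun i => cwwPos M (l i) (q i)))^2)^k ≤
      Fintype.card (Fin (s+1) → Fin (2^M)) * ((cwwK k)^s * (2 * B)^k) := by
  have hK : 0 ≤ cwwK k := by unfold cwwK; positivity
  have reQ : ∀ G : (Fin (s+1) → Fin (2^M)) → ℝ, ∑ q, G q =
      ∑ q0 : Fin (2^M), ∑ q' : Fin s → Fin (2^M), G (Fin.cons q0 q') := by
    intro G
    rw [← (Fin.consEquiv (fun _ => Fin (2^M))).sum_comp, Fintype.sum_prod_type]
    rfl
  have reLR : ∀ (G : (Fin (s+1) → Fin (M+1)) → ℝ), ∑ q, G q =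
      ∑ l', ∑ l0, G (Fin.cons l0 l') := by
    intro G
    rw [← (Fin.consEquiv (fun _ => Fin (M+1))).sum_comp, Fintype.sum_prod_type, Finset.sum_comm]
    rfl
  have hpos : ∀ (l0 : Fin (M+1)) (l' : Fin s → Fin (M+1)) (q0 : Fin (2^M)) (q' : Fin s → Fin (2^M)),
      (fun i : Fin (s+1) => cwwPos M (Fin.cons (α := fun _ => Fin (M+1)) l0 l' i : Fin (M+1))
        (Fin.cons (α := fun _ => Fin (2^M)) q0 q' i : Fin (2^M))) =
      Fin.cons (α := fun _ => ℕ) (cwwPos M l0 q0) (fun i => cwwPos M (l' i) (q' i)) := by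
    intro l0 l' q0 q'
    funext i
    refine Fin.cases ?_ (fun i => ?_) i <;> simp
  have hcard : (Fintype.card (Fin (s+1) → Fin (2^M)) : ℝ) =
      ∑ q0 : Fin (2^M), ∑ q' : Fin s → Fin (2^M), (1:ℝ) := by
    rw [← reQ (fun _ => 1)]; simp
  rw [hcard, reQ, Finset.sum_mul]
  refine Finset.sum_le_sum (fun q0 _ => ?_)
  have step := cww_multi k hk M s ℝ (fun l' m' => ∑ l0 : Fin (M+1), cwwSg M l0 q0 *
    a (Fin.cons l0 l') (Fin.cons (α := fun _ => ℕ) (cwwPos M l0 q0) m'))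
  simp only [Real.norm_eq_abs, sq_abs, smul_eq_mul] at step
  have e : ∀ q' : Fin s → Fin (2^M), (∑ l : Fin (s+1) → Fin (M+1), (∏ i, cwwSg M (l i)
      (Fin.cons (α := fun _ => Fin (2^M)) q0 q' i : Fin (2^M))) *
        a l (fun i => cwwPos M (l i) (Fin.cons (α := fun _ => Fin (2^M)) q0 q' i : Fin (2^M)))) =
      ∑ l' : Fin s → Fin (M+1), (∏ i, cwwSg M (l' i) (q' i)) * ∑ l0 : Fin (M+1), cwwSg M l0 q0 *
    a (Fin.cons l0 l') (Fin.cons (α := fun _ => ℕ) (cwwPos M l0 q0) (fun i => cwwPos M (l' i) (q' i))) := by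
    intro q'
    rw [reLR]
    refine Finset.sum_congr rfl (fun l' _ => ?_)
    rw [Finset.mul_sum]
    refine Finset.sum_congr rfl (fun l0 _ => ?_)
    rw [hpos, Fin.prod_univ_succ]
    simp only [Fin.cons_zero, Fin.cons_succ]
    ring
  simp only [e]
  refine step.trans ?_
  rw [Finset.sum_mul, Finset.mul_sum]
  refine Finset.sum_le_sum (fun q' _ => ?_)
  rw [one_mul]
  refine mul_le_mul_of_nonneg_left ?_ (by positivity)
  refine pow_le_pow_left₀ (by positivity) ?_ k
  refine le_trans ?_ (mul_le_mul_of_nonneg_left (hB (Fin.cons q0 q')) zero_le_two)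
  rw [reLR, Finset.mul_sum]
  refine Finset.sum_le_sum (fun l' _ => ?_)
  simp only [hpos]
  set b : Fin (M+1) → ℝ := fun l0 => a (Fin.cons l0 l')
    (Fin.cons (α := fun _ => ℕ) (cwwPos M l0 q0) (fun i => cwwPos M (l' i) (q' i))) with hb
  change (∑ l0 : Fin (M+1), cwwSg M l0 q0 * b l0)^2 ≤ 2 * ∑ l0, b l0 ^ 2
  set T := Finset.univ.filter (fun l0 => b l0 ≠ 0) with hT
  have h1 : ∑ l0 : Fin (M+1), cwwSg M l0 q0 * b l0 = ∑ l0 ∈ T, cwwSg M l0 q0 * b l0 := by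
    symm
    apply Finset.sum_subset (Finset.subset_univ _)
    intro x _ hx
    have : b x = 0 := by simpa [hT] using hx
    rw [this, mul_zero]
  have hTc : T.card ≤ 2 := by
    by_contra hcon
    obtain ⟨x, y, z, hx, hy, hz, hxy, hxz, hyz⟩ := Finset.two_lt_card_iff.mp (not_le.mp hcon)
    have key : ∀ x ∈ T, ((x : ℕ) - 1) + ∑ i, ((l' i : ℕ) - 1) = n := by
      intro x hx
      have := ha _ _ (by simpa [hT] using hx : b x ≠ 0)
      rw [Fin.sum_univ_succ] at this
      simpa using this
    have := key x hx
    have := key y hy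
    have := key z hz
    rw [Ne, Fin.ext_iff] at hxy hxz hyz
    omega
  have h2 : ∀ l0 : Fin (M+1), (cwwSg M l0 q0 * b l0)^2 = b l0 ^ 2 := by
    intro l0
    rw [mul_pow]
    unfold cwwSg
    rw [← pow_mul, mul_comm _ 2, pow_mul]
    simp
  rw [h1]
  calc _ ≤ (T.card : ℝ) * ∑ l0 ∈ T, (cwwSg M l0 q0 * b l0)^2 := sq_sum_le_card_mul_sum_sq
    _ = (T.card : ℝ) * ∑ l0 ∈ T, b l0 ^2 := by simp only [h2]
    _ ≤ 2 * ∑ l0, b l0 ^ 2 := by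
      gcongr
      · exact_mod_cast hTc
      · exact Finset.subset_univ _

/-! ### Haar functions and floors -/

lemma cww_haar_floor (j m : ℕ) (x : ℝ) (hx : 0 ≤ x) :
    haar1 (j:ℤ) m x = if ⌊2^(j+1) * x⌋₊ = 2*m then 1 else if ⌊2^(j+1) * x⌋₊ = 2*m+1 then -1 else 0 := by
  have h2 : (0:ℝ) < 2^j := by positivity
  have hne : ((j:ℤ) = -1) = False := by simp only [eq_iff_iff, iff_false]; omega
  have e1 : ((m:ℝ)/2^j ≤ x ∧ x < ((m:ℝ) + 1/2)/2^j) ↔ ⌊2^(j+1) * x⌋₊ = 2*m := by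
    rw [Nat.floor_eq_iff (by positivity), div_le_iff₀ h2, lt_div_iff₀ h2, pow_succ]
    push_cast
    constructor <;> rintro ⟨h, h'⟩ <;> constructor <;> linarith
  have e2 : (((m:ℝ) + 1/2)/2^j ≤ x ∧ x < ((m:ℝ)+1)/2^j) ↔ ⌊2^(j+1) * x⌋₊ = 2*m+1 := by
    rw [Nat.floor_eq_iff (by positivity), div_le_iff₀ h2, lt_div_iff₀ h2, pow_succ]
    push_cast
    constructor <;> rintro ⟨h, h'⟩ <;> constructor <;> linarith
  unfold haar1
  simp only [hne, if_false, Int.toNat_natCast, e1, e2]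

lemma cww_floor_div (M r : ℕ) (hr : r ≤ M) (x : ℝ) : ⌊2^M * x⌋₊ / 2^(M-r) = ⌊2^r * x⌋₊ := by
  have := Nat.floor_div_natCast (2^M * x) (2^(M-r))
  rw [← this]
  congr 1
  push_cast
  rw [div_eq_iff (by positivity)]
  calc (2:ℝ)^M * x = 2^(r + (M-r)) * x := by rw [Nat.add_sub_cancel' hr]
    _ = _ := by rw [pow_add]; ring

lemma cww_haar_grid (M l m : ℕ) (hl : l ≤ M) (hm : m < 2^(l-1)) (x : ℝ) (hx : 0 ≤ x) (hx1 : x < 1) :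
    haar1 ((l:ℤ)-1) m x = if cwwPos M l ⌊2^M * x⌋₊ = m then cwwSg M l ⌊2^M * x⌋₊ else 0 := by
  have hq : ⌊2^M * x⌋₊ < 2^M := by
    rw [Nat.floor_lt (by positivity)]
    push_cast
    have : (0:ℝ) < 2^M := by positivity
    nlinarith
  unfold cwwPos cwwSg
  rcases Nat.eq_zero_or_pos l with rfl | hl0
  · have hm0 : m = 0 := by simpa using hm
    subst hm0
    have hq2 : ⌊2^M * x⌋₊ < 2^(M+1) := hq.trans (by gcongr <;> omega)
    simp [haar1, hx, hx1, Nat.div_eq_of_lt hq, Nat.div_eq_of_lt hq2]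
  · obtain ⟨j, rfl⟩ : ∃ j, l = j + 1 := ⟨l - 1, by omega⟩
    rw [show (((j+1 : ℕ):ℤ) - 1) = (j:ℤ) by push_cast; ring, cww_haar_floor j m x hx,
      cww_floor_div M (j+1) hl, show M + 1 - (j+1) = (M - (j+1)) + 1 by omega, pow_succ 2 (M - (j+1)),
      ← Nat.div_div_eq_div_mul, cww_floor_div M (j+1) hl]
    set t := ⌊2^(j+1) * x⌋₊
    rcases Nat.even_or_odd' t with ⟨c, hc | hc⟩
    · rw [hc]
      have : 2 * c / 2 = c := by omega
      have h3 : ¬ (2 * c = 2 * m + 1) := by omega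
      simp only [this, h3, if_false, pow_mul]
      simp
    · rw [hc]
      have : (2 * c + 1) / 2 = c := by omega
      have h3 : ¬ (2 * c + 1 = 2 * m) := by omega
      simp only [this, h3, if_false, pow_mul, pow_succ]
      simp

/-! ### Orthogonality -/

lemma cww_haar_measurable (j : ℤ) (m : ℕ) : Measurable (haar1 j m) := by
  unfold haar1
  refine Measurable.ite (MeasurableSet.const _) ?_ ?_
  · exact Measurable.ite (measurableSet_Ico (a := (0:ℝ)) (b := 1)) measurable_const measurable_const
  · exact Measurable.ite (measurableSet_Ico) measurable_const
      (Measurable.ite (measurableSet_Ico) measurable_const measurable_const)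

lemma cww_haar_abs (j : ℤ) (m : ℕ) (x : ℝ) : |haar1 j m x| ≤ 1 := by
  unfold haar1
  split_ifs <;> simp

lemma cww_haar_integrable (j j' : ℤ) (m m' : ℕ) :
    Integrable (fun x => haar1 j m x * haar1 j' m' x) (volume.restrict (Set.Icc (0:ℝ) 1)) := by
  refine Integrable.of_bound
    ((cww_haar_measurable j m).mul (cww_haar_measurable j' m')).aestronglyMeasurable 1 ?_
  refine Filter.Eventually.of_forall (fun x => ?_)
  rw [Real.norm_eq_abs, abs_mul]
  exact mul_le_one₀ (cww_haar_abs _ _ _) (abs_nonneg _) (cww_haar_abs _ _ _)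

lemma cww_setInt_Ico (a b : ℝ) (h0 : 0 ≤ a) (hab : a ≤ b) (h1 : b ≤ 1) :
    ∫ x in Set.Ico (0:ℝ) 1, (Set.Ico a b).indicator (fun _ => (1:ℝ)) x = b - a := by
  rw [setIntegral_indicator measurableSet_Ico, Set.inter_eq_right.mpr (Set.Ico_subset_Ico h0 h1)]
  simp [hab]

lemma cww_haar_int_zero (j m : ℕ) (hm : m < 2^j) :
    ∫ x in Set.Ico (0:ℝ) 1, haar1 (j:ℤ) m x = 0 := by
  have h2 : (0:ℝ) < 2^j := by positivity
  have hm' : (m:ℝ) + 1 ≤ 2^j := by exact_mod_cast hm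
  have e : haar1 (j:ℤ) m = fun x =>
      (Set.Ico ((m:ℝ)/2^j) (((m:ℝ)+1/2)/2^j)).indicator (fun _ => (1:ℝ)) x
      - (Set.Ico (((m:ℝ)+1/2)/2^j) (((m:ℝ)+1)/2^j)).indicator (fun _ => (1:ℝ)) x := by
    funext x
    have hne : ((j:ℤ) = -1) = False := by simp only [eq_iff_iff, iff_false]; omega
    simp only [haar1, hne, if_false, Int.toNat_natCast, Set.indicator_apply, Set.mem_Ico]
    by_cases h : (m:ℝ)/2^j ≤ x ∧ x < ((m:ℝ)+1/2)/2^j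
    · have h' : ¬ (((m:ℝ)+1/2)/2^j ≤ x ∧ x < ((m:ℝ)+1)/2^j) := by
        rintro ⟨h1, -⟩; linarith [h.2]
      rw [if_pos h, if_pos h, if_neg h', sub_zero]
    · simp only [h, if_false]
      split_ifs <;> simp
  rw [e, integral_sub]
  · rw [cww_setInt_Ico, cww_setInt_Ico]
    · ring
    · positivity
    · gcongr; linarith
    · rw [div_le_one h2]; exact hm'
    · positivity
    · gcongr; linarith
    · rw [div_le_one h2]; linarith
  · exact (integrable_const (1:ℝ)).indicator measurableSet_Ico
  · exact (integrable_const (1:ℝ)).indicator measurableSet_Ico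

lemma cww_haar_sq_int (j : ℤ) (m : ℕ) (hj : -1 ≤ j) (hm : m < 2^j.toNat) :
    ∫ x in Set.Ico (0:ℝ) 1, haar1 j m x * haar1 j m x = 1 / 2^j.toNat := by
  have h2 : (0:ℝ) < 2^j.toNat := by positivity
  have hm' : (m:ℝ) + 1 ≤ 2^j.toNat := by exact_mod_cast hm
  have e : (fun x => haar1 j m x * haar1 j m x) = fun x =>
      (Set.Ico ((m:ℝ)/2^j.toNat) (((m:ℝ)+1)/2^j.toNat)).indicator (fun _ => (1:ℝ)) x := by
    funext x
    simp only [Set.indicator_apply, Set.mem_Ico]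
    by_cases hj1 : j = -1
    · subst hj1
      have hm0 : m = 0 := by simpa using hm
      subst hm0
      simp [haar1]
    · have a1 : (m:ℝ)/2^j.toNat ≤ ((m:ℝ)+1/2)/2^j.toNat := by gcongr; linarith
      have a2 : ((m:ℝ)+1/2)/2^j.toNat ≤ ((m:ℝ)+1)/2^j.toNat := by gcongr; norm_num
      simp only [haar1, hj1, if_false]
      split_ifs with h1 h2 h3 h4 h5 <;> grind
  rw [e, cww_setInt_Ico]
  · ring
  · positivity
  · gcongr; linarith
  · rw [div_le_one h2]; exact hm'

lemma cww_haar_orth_lt (j j' : ℤ) (m m' : ℕ) (hj : -1 ≤ j) (hjj : j < j')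
    (hm' : m' < 2^j'.toNat) :
    ∫ x in Set.Ico (0:ℝ) 1, haar1 j m x * haar1 j' m' x = 0 := by
  obtain ⟨r, rfl⟩ : ∃ r : ℕ, j' = r := ⟨j'.toNat, by omega⟩
  rw [Int.toNat_natCast] at hm'
  have h2 : (0:ℝ) < 2^r := by positivity
  set x0 : ℝ := m' / 2^r with hx0
  have hx00 : 0 ≤ x0 := by positivity
  have hx01 : x0 < 1 := by rw [hx0, div_lt_one h2]; exact_mod_cast hm'
  have e : ∀ x ∈ Set.Ico (0:ℝ) 1, haar1 j m x * haar1 r m' x = haar1 j m x0 * haar1 r m' x := by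
    rintro x ⟨hxa, hxb⟩
    by_cases hz : haar1 r m' x = 0
    · rw [hz]; simp
    congr 1
    by_cases hj1 : j = -1
    · simp [haar1, hj1, hxa, hxb, hx00, hx01]
    obtain ⟨p, rfl⟩ : ∃ p : ℕ, j = p := ⟨j.toNat, by omega⟩
    have hpr : p + 1 ≤ r := by omega
    rw [cww_haar_floor _ _ _ hxa, cww_haar_floor _ _ _ hx00]
    have hfl : ⌊2^r * x⌋₊ = m' := by
      rw [cww_haar_floor _ _ _ hxa] at hz
      have := cww_floor_div (r+1) r (by omega) x
      rw [show r + 1 - r = 1 by omega, pow_one] at this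
      rw [← this]
      split_ifs at hz <;> first | omega | exact absurd rfl hz
    have hfl0 : ⌊2^r * x0⌋₊ = m' := by
      rw [hx0, mul_div_cancel₀ _ h2.ne']; simp
    rw [← cww_floor_div r (p+1) hpr x, ← cww_floor_div r (p+1) hpr x0, hfl, hfl0]
  rw [setIntegral_congr_fun measurableSet_Ico e, integral_const_mul, cww_haar_int_zero r m' hm',
    mul_zero]

lemma cww_haar_orth (j j' : ℤ) (m m' : ℕ) (hj : -1 ≤ j) (hj' : -1 ≤ j')
    (hm : m < 2^j.toNat) (hm' : m' < 2^j'.toNat) :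
    ∫ x in Set.Icc (0:ℝ) 1, haar1 j m x * haar1 j' m' x =
      if j = j' ∧ m = m' then 1 / 2^j.toNat else 0 := by
  rw [← setIntegral_congr_set (Ico_ae_eq_Icc (μ := volume))]
  rcases lt_trichotomy j j' with h | h | h
  · rw [cww_haar_orth_lt j j' m m' hj h hm', if_neg (by rintro ⟨h', -⟩; omega)]
  · subst h
    by_cases hmm : m = m'
    · subst hmm
      simp only [and_self, if_true]
      exact cww_haar_sq_int j m hj hm
    · rw [if_neg (by tauto)]
      by_cases hj1 : j = -1
      · subst hj1; simp at hm hm'; omega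
      obtain ⟨p, rfl⟩ : ∃ p : ℕ, j = p := ⟨j.toNat, by omega⟩
      have e : ∀ x ∈ Set.Ico (0:ℝ) 1, haar1 p m x * haar1 p m' x = 0 := by
        rintro x ⟨hxa, hxb⟩
        rw [cww_haar_floor _ _ _ hxa, cww_haar_floor _ _ _ hxa]
        split_ifs <;> first | omega | simp
      rw [setIntegral_congr_fun measurableSet_Ico e]; simp
  · have := cww_haar_orth_lt j' j m' m hj' h hm
    simp only [mul_comm (haar1 j' m' _)] at this
    rw [this, if_neg (by rintro ⟨h', -⟩; omega)]

lemma cww_haarFn_orth (d : ℕ) (j j' : Fin d → ℤ) (m m' : Fin d → ℕ) (hj : ∀ i, -1 ≤ j i)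
    (hj' : ∀ i, -1 ≤ j' i) (hm : ∀ i, m i < 2^(j i).toNat) (hm' : ∀ i, m' i < 2^(j' i).toNat) :
    Integrable (fun x => haarFn d j m x * haarFn d j' m' x) (volume.restrict (unitCube d)) ∧
    ∫ x in unitCube d, haarFn d j m x * haarFn d j' m' x =
      if j = j' ∧ m = m' then 1 / 2^(jnorm d j) else 0 := by
  have e : (fun x : Fin d → ℝ => haarFn d j m x * haarFn d j' m' x) =
      fun x => ∏ i, (fun y => haar1 (j i) (m i) y * haar1 (j' i) (m' i) y) (x i) := by
    funext x; unfold haarFn; rw [Finset.prod_mul_distrib]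
  have hv : (volume.restrict (unitCube d) : Measure (Fin d → ℝ)) =
      Measure.pi (fun _ => volume.restrict (Set.Icc (0:ℝ) 1)) := by
    unfold unitCube; rw [volume_pi, Measure.restrict_pi_pi]
  rw [hv, e]
  constructor
  · exact Integrable.fintype_prod (fun i => cww_haar_integrable _ _ _ _)
  · rw [integral_fintype_prod_eq_prod (f := fun i y => haar1 (j i) (m i) y * haar1 (j' i) (m' i) y)]
    simp only [cww_haar_orth _ _ _ _ (hj _) (hj' _) (hm _) (hm' _)]
    by_cases h : j = j' ∧ m = m'
    · obtain ⟨rfl, rfl⟩ := h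
      simp [jnorm, Finset.prod_pow_eq_pow_sum]
    · rw [if_neg h]
      obtain ⟨i, hi⟩ : ∃ i, ¬ (j i = j' i ∧ m i = m' i) := by
        by_contra hcon
        push Not at hcon
        exact h ⟨funext fun i => (hcon i).1, funext fun i => (hcon i).2⟩
      exact Finset.prod_eq_zero (Finset.mem_univ i) (if_neg hi)

lemma cww_coeff (d : ℕ) (F : Finset ((Fin d → ℤ) × (Fin d → ℕ)))
    (c : (Fin d → ℤ) × (Fin d → ℕ) → ℝ)
    (hF : ∀ pm ∈ F, (∀ i, -1 ≤ pm.1 i) ∧ (∀ i, pm.2 i < 2 ^ (pm.1 i).toNat))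
    (pm : (Fin d → ℤ) × (Fin d → ℕ)) (hpm : pm ∈ F) :
    haarCoeff d (fun x => ∑ pm ∈ F, c pm * haarFn d pm.1 pm.2 x) pm.1 pm.2
      = c pm / 2^(jnorm d pm.1) := by
  unfold haarCoeff
  simp only [Finset.sum_mul, mul_assoc]
  rw [integral_finsetSum]
  · have : ∀ p ∈ F, ∫ x in unitCube d, c p * (haarFn d p.1 p.2 x * haarFn d pm.1 pm.2 x) =
        if p = pm then c pm / 2^(jnorm d pm.1) else 0 := by
      intro p hp
      rw [integral_const_mul, (cww_haarFn_orth d p.1 pm.1 p.2 pm.2 (hF p hp).1 (hF pm hpm).1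
        (hF p hp).2 (hF pm hpm).2).2]
      by_cases h : p = pm
      · subst h; simp; ring
      · rw [if_neg h, if_neg (fun hh => h (Prod.ext hh.1 hh.2)), mul_zero]
    rw [Finset.sum_congr rfl this]
    simp [hpm]
  · intro p hp
    exact (cww_haarFn_orth d p.1 pm.1 p.2 pm.2 (hF p hp).1 (hF pm hpm).1
        (hF p hp).2 (hF pm hpm).2).1.const_mul _

/-- grid cell index -/
def cwwPhi (M : ℕ) (x : ℝ) : Fin (2^M) := Fin.ofNat (2^M) ⌊2^M * x⌋₊

lemma cwwPhi_val (M : ℕ) (x : ℝ) (h0 : 0 ≤ x) (h1 : x < 1) : (cwwPhi M x : ℕ) = ⌊2^M * x⌋₊ := by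
  unfold cwwPhi
  simp only [Fin.val_ofNat]
  apply Nat.mod_eq_of_lt
  rw [Nat.floor_lt (by positivity)]
  push_cast
  have : (0:ℝ) < 2^M := by positivity
  nlinarith

lemma cwwPhi_measurable (M : ℕ) : Measurable (cwwPhi M) := by
  unfold cwwPhi
  exact (measurable_from_top (f := Fin.ofNat (2^M))).comp
    (Nat.measurable_floor.comp (measurable_const_mul _))

lemma cwwPhi_map (M : ℕ) (q : Fin (2^M)) :
    ((volume.restrict (Set.Ico (0:ℝ) 1)).map (cwwPhi M)) {q} = ENNReal.ofReal (1/2^M) := by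
  rw [Measure.map_apply (cwwPhi_measurable M) (measurableSet_singleton q),
    Measure.restrict_apply (cwwPhi_measurable M (measurableSet_singleton q))]
  have h2 : (0:ℝ) < 2^M := by positivity
  have hq : ((q:ℕ):ℝ) + 1 ≤ 2^M := by exact_mod_cast q.2
  have : cwwPhi M ⁻¹' {q} ∩ Set.Ico (0:ℝ) 1 = Set.Ico ((q:ℝ)/2^M) (((q:ℝ)+1)/2^M) := by
    ext x
    simp only [Set.mem_inter_iff, Set.mem_preimage, Set.mem_singleton_iff, Set.mem_Ico]
    constructor
    · rintro ⟨h, h0, h1⟩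
      have := cwwPhi_val M x h0 h1
      rw [h] at this
      have := (Nat.floor_eq_iff (by positivity)).mp this.symm
      rw [div_le_iff₀ h2, lt_div_iff₀ h2]
      constructor <;> linarith
    · rintro ⟨h, h'⟩
      have h0 : 0 ≤ x := le_trans (by positivity) h
      have h1 : x < 1 := lt_of_lt_of_le h' (by rw [div_le_one h2]; exact hq)
      refine ⟨?_, h0, h1⟩
      apply Fin.ext
      rw [cwwPhi_val M x h0 h1, Nat.floor_eq_iff (by positivity)]
      rw [div_le_iff₀ h2] at h
      rw [lt_div_iff₀ h2] at h'
      constructor <;> linarith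
  rw [this, Real.volume_Ico]
  congr 1; ring

lemma cww_map_pi (d M : ℕ) :
    (volume.restrict (unitCubeIco d)).map (fun x i => cwwPhi M (x i)) =
      Measure.pi (fun _ : Fin d => (volume.restrict (Set.Ico (0:ℝ) 1)).map (cwwPhi M)) := by
  have hv : (volume.restrict (unitCubeIco d) : Measure (Fin d → ℝ)) =
      Measure.pi (fun _ => volume.restrict (Set.Ico (0:ℝ) 1)) := by
    unfold unitCubeIco; rw [volume_pi, Measure.restrict_pi_pi]
  rw [hv]
  exact Measure.pi_map_pi (fun _ => (cwwPhi_measurable M).aemeasurable)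

lemma cww_map_singleton (d M : ℕ) (q : Fin d → Fin (2^M)) :
    ((volume.restrict (unitCubeIco d)).map (fun x i => cwwPhi M (x i))) {q} =
      ENNReal.ofReal ((1/2^M)^d) := by
  rw [cww_map_pi, Measure.pi_singleton]
  simp only [cwwPhi_map]
  rw [Finset.prod_const, Finset.card_univ, Fintype.card_fin, ENNReal.ofReal_pow (by positivity)]

lemma cwwPhiPi_measurable (d M : ℕ) :
    Measurable (fun (x : Fin d → ℝ) (i : Fin d) => cwwPhi M (x i)) :=
  measurable_pi_lambda _ (fun i => (cwwPhi_measurable M).comp (measurable_pi_apply i))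

lemma cww_integral_grid (d M : ℕ) (G : (Fin d → Fin (2^M)) → ℝ) :
    ∫ x in unitCubeIco d, G (fun i => cwwPhi M (x i)) = (1/2^M)^d * ∑ q, G q := by
  have hm := cwwPhiPi_measurable d M
  have hG : Measurable G := measurable_of_finite G
  rw [← integral_map (φ := fun (x : Fin d → ℝ) (i : Fin d) => cwwPhi M (x i))
    hm.aemeasurable hG.aestronglyMeasurable]
  have : IsFiniteMeasure ((volume.restrict (unitCubeIco d)).map (fun x i => cwwPhi M (x i))) := by
    rw [cww_map_pi]; infer_instance
  rw [integral_fintype (Integrable.of_finite), Finset.mul_sum]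
  refine Finset.sum_congr rfl (fun q _ => ?_)
  rw [Measure.real, cww_map_singleton, ENNReal.toReal_ofReal (by positivity), smul_eq_mul]

lemma cww_ae_grid (d M : ℕ) (P : (Fin d → Fin (2^M)) → Prop)
    (h : ∀ᵐ x ∂(volume.restrict (unitCubeIco d)), P (fun i => cwwPhi M (x i))) : ∀ q, P q := by
  have hm := cwwPhiPi_measurable d M
  have h' : ∀ᵐ q ∂((volume.restrict (unitCubeIco d)).map (fun x i => cwwPhi M (x i))), P q := by
    rw [ae_map_iff hm.aemeasurable (Set.toFinite _).measurableSet]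
    exact h
  rw [ae_iff_of_countable] at h'
  intro q
  apply h' q
  rw [cww_map_singleton]
  have : (0:ℝ) < (1/2^M)^d := by positivity
  simpa using this

/-- index `j` from the shifted level `l` -/
def cwwJ {d M : ℕ} (l : Fin d → Fin (M+1)) : Fin d → ℤ := fun i => ((l i : ℕ) : ℤ) - 1

lemma cwwJ_toNat {d M : ℕ} (l : Fin d → Fin (M+1)) (i : Fin d) : (cwwJ l i).toNat = (l i : ℕ) - 1 := by
  unfold cwwJ; omega

lemma cwwJ_inj {d M : ℕ} : Function.Injective (cwwJ (d := d) (M := M)) := by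
  intro l l' h
  funext i
  have := congrFun h i
  unfold cwwJ at this
  apply Fin.ext; omega

open scoped Classical in
def cwwA {d : ℕ} (M : ℕ) (F : Finset ((Fin d → ℤ) × (Fin d → ℕ)))
    (c : (Fin d → ℤ) × (Fin d → ℕ) → ℝ) (l : Fin d → Fin (M+1)) (m : Fin d → ℕ) : ℝ :=
  if (cwwJ l, m) ∈ F then c (cwwJ l, m) else 0

lemma cww_mem_dyadic (M l : ℕ) (hl : l ≤ M) (x : ℝ) (h0 : 0 ≤ x) (h1 : x < 1) :
    x ∈ Set.Ico ((cwwPos M l (cwwPhi M x) : ℝ) / 2^(l-1)) (((cwwPos M l (cwwPhi M x):ℝ) + 1)/2^(l-1)) := by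
  have hp : cwwPos M l (cwwPhi M x) = ⌊2^(l-1) * x⌋₊ := by
    have hlt := (cwwPhi M x).2
    unfold cwwPos
    rcases Nat.eq_zero_or_pos l with rfl | hl0
    · rw [Nat.div_eq_of_lt (hlt.trans (by gcongr <;> omega))]
      symm
      rw [Nat.floor_eq_zero]; simpa using h1
    · rw [cwwPhi_val M x h0 h1, show M + 1 - l = M - (l-1) by omega]
      exact cww_floor_div M (l-1) (by omega) x
  have h2 : (0:ℝ) < 2^(l-1) := by positivity
  have := (Nat.floor_eq_iff (by positivity)).mp hp.symm
  rw [Set.mem_Ico, div_le_iff₀ h2, lt_div_iff₀ h2]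
  constructor <;> linarith

section
variable {d n : ℕ} (F : Finset ((Fin d → ℤ) × (Fin d → ℕ)))
    (c : (Fin d → ℤ) × (Fin d → ℕ) → ℝ)
    (hF : ∀ pm ∈ F, (∀ i, -1 ≤ pm.1 i) ∧ (∀ i, pm.2 i < 2 ^ (pm.1 i).toNat) ∧ jnorm d pm.1 = n)

lemma cwwA_supp (hF : ∀ pm ∈ F, (∀ i, -1 ≤ pm.1 i) ∧ (∀ i, pm.2 i < 2 ^ (pm.1 i).toNat) ∧ jnorm d pm.1 = n)
    (l : Fin d → Fin (n+1+1)) (m : Fin d → ℕ) (h : cwwA (n+1) F c l m ≠ 0) :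
    ∑ i, ((l i : ℕ) - 1) = n := by
  have hmem : (cwwJ l, m) ∈ F := by
    by_contra hcon
    exact h (by simp [cwwA, hcon])
  have := (hF _ hmem).2.2
  simpa [jnorm, cwwJ_toNat] using this

lemma cww_f_grid (hF : ∀ pm ∈ F, (∀ i, -1 ≤ pm.1 i) ∧ (∀ i, pm.2 i < 2 ^ (pm.1 i).toNat) ∧ jnorm d pm.1 = n)
    (x : Fin d → ℝ) (hx : x ∈ unitCubeIco d) :
    ∑ pm ∈ F, c pm * haarFn d pm.1 pm.2 x =
      ∑ l : Fin d → Fin (n+1+1), (∏ i, cwwSg (n+1) (l i) (cwwPhi (n+1) (x i))) *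
        cwwA (n+1) F c l (fun i => cwwPos (n+1) (l i) (cwwPhi (n+1) (x i))) := by
  classical
  have hx' : ∀ i, 0 ≤ x i ∧ x i < 1 := fun i => hx i (Set.mem_univ i)
  set pos : (Fin d → Fin (n+1+1)) → Fin d → ℕ :=
    fun l i => cwwPos (n+1) (l i) (cwwPhi (n+1) (x i)) with hpos
  set sg : (Fin d → Fin (n+1+1)) → ℝ :=
    fun l => ∏ i, cwwSg (n+1) (l i) (cwwPhi (n+1) (x i)) with hsg
  have e1 : ∀ l, sg l * cwwA (n+1) F c l (pos l) =
      ∑ pm ∈ F, if pm = (cwwJ l, pos l) then c pm * sg l else 0 := by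
    intro l
    rw [Finset.sum_ite_eq']
    unfold cwwA
    split_ifs <;> ring
  change _ = ∑ l, sg l * cwwA (n+1) F c l (pos l)
  simp only [e1]
  rw [Finset.sum_comm]
  refine Finset.sum_congr rfl (fun pm hpm => ?_)
  obtain ⟨hj, hm, hn⟩ := hF pm hpm
  have hle : ∀ i, (pm.1 i).toNat ≤ n := by
    intro i
    rw [← hn]
    exact Finset.single_le_sum (f := fun i => (pm.1 i).toNat) (fun _ _ => Nat.zero_le _) (Finset.mem_univ i)
  set l0 : Fin d → Fin (n+1+1) := fun i => ⟨(pm.1 i + 1).toNat, by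
    have := hle i; have := hj i; omega⟩ with hl0
  have hJ : cwwJ l0 = pm.1 := by
    funext i
    simp only [cwwJ, hl0]
    have := hj i; omega
  rw [Finset.sum_eq_single l0]
  · have e2 : haarFn d pm.1 pm.2 x = if pos l0 = pm.2 then sg l0 else 0 := by
      unfold haarFn
      have : ∀ i, haar1 (pm.1 i) (pm.2 i) (x i) =
          if pos l0 i = pm.2 i then cwwSg (n+1) (l0 i) (cwwPhi (n+1) (x i)) else 0 := by
        intro i
        have h := cww_haar_grid (n+1) (l0 i) (pm.2 i) (by have := (l0 i).2; omega)
          (by rw [← cwwJ_toNat, hJ]; exact hm i) (x i) (hx' i).1 (hx' i).2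
        rw [← cwwPhi_val _ _ (hx' i).1 (hx' i).2] at h
        rw [← hJ]
        exact h
      simp only [this]
      by_cases h : pos l0 = pm.2
      · rw [if_pos h]
        refine Finset.prod_congr rfl (fun i _ => ?_)
        rw [if_pos (congrFun h i)]
      · rw [if_neg h]
        obtain ⟨i, hi⟩ := Function.ne_iff.mp h
        exact Finset.prod_eq_zero (Finset.mem_univ i) (if_neg hi)
    rw [e2]
    by_cases h : pos l0 = pm.2
    · rw [if_pos h, if_pos (Prod.ext hJ.symm h.symm)]
    · rw [if_neg h, if_neg (fun hh => h (by rw [hh])), mul_zero]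
  · intro l _ hl
    rw [if_neg]
    intro hh
    apply hl
    apply cwwJ_inj
    rw [hJ, hh]
  · simp

lemma cww_sq_grid (hF : ∀ pm ∈ F, (∀ i, -1 ≤ pm.1 i) ∧ (∀ i, pm.2 i < 2 ^ (pm.1 i).toNat) ∧ jnorm d pm.1 = n)
    (x : Fin d → ℝ) (hx : x ∈ unitCubeIco d) :
    ENNReal.ofReal (∑ l : Fin d → Fin (n+1+1),
        (cwwA (n+1) F c l (fun i => cwwPos (n+1) (l i) (cwwPhi (n+1) (x i))))^2) ≤
      (sqFnE d (fun x => ∑ pm ∈ F, c pm * haarFn d pm.1 pm.2 x) x)^2 := by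
  classical
  have hx' : ∀ i, 0 ≤ x i ∧ x i < 1 := fun i => hx i (Set.mem_univ i)
  set pos : (Fin d → Fin (n+1+1)) → Fin d → ℕ :=
    fun l i => cwwPos (n+1) (l i) (cwwPhi (n+1) (x i)) with hpos
  unfold sqFnE
  rw [← ENNReal.rpow_natCast, ← ENNReal.rpow_mul]
  norm_num only
  rw [ENNReal.rpow_one, ENNReal.ofReal_sum_of_nonneg (fun _ _ => sq_nonneg _)]
  have hv : ∀ l : Fin d → Fin (n+1+1), cwwJ l ∈ validJ d := by
    intro l i; unfold cwwJ; omega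
  have hinj : Function.Injective (fun l : Fin d → Fin (n+1+1) => (⟨cwwJ l, hv l⟩ : validJ d)) := by
    intro l l' h
    exact cwwJ_inj (congrArg Subtype.val h)
  refine le_trans ?_ (ENNReal.tsum_comp_le_tsum_of_injective hinj _)
  rw [tsum_fintype]
  refine Finset.sum_le_sum (fun l _ => ?_)
  by_cases hmem : (cwwJ l, pos l) ∈ F
  · have hD : pos l ∈ Dfin d (cwwJ l) := by
      simp only [Dfin, Fintype.mem_piFinset, Finset.mem_range]
      exact (hF _ hmem).2.1
    refine le_trans ?_ (Finset.single_le_sum (fun _ _ => zero_le) hD)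
    apply ENNReal.ofReal_le_ofReal
    have hco := cww_coeff d F c (fun pm h => ⟨(hF pm h).1, (hF pm h).2.1⟩) _ hmem
    simp only at hco
    rw [hco]
    have hbox : x ∈ dyadicBox d (cwwJ l) (pos l) := by
      intro i _
      change x i ∈ dyadicI _ _
      unfold dyadicI
      rw [cwwJ_toNat]
      exact cww_mem_dyadic (n+1) (l i) (by have := (l i).2; omega) (x i) (hx' i).1 (hx' i).2
    rw [Set.indicator_of_mem hbox]
    unfold cwwA
    change (if (cwwJ l, pos l) ∈ F then c (cwwJ l, pos l) else 0)^2 ≤ _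
    rw [if_pos hmem, div_pow, ← pow_mul, mul_comm (jnorm d (cwwJ l)) 2, mul_one,
      mul_div_cancel₀ _ (by positivity)]
  · have : cwwA (n+1) F c l (pos l) = 0 := by simp [cwwA, hmem]
    change ENNReal.ofReal ((cwwA (n+1) F c l (pos l))^2) ≤ _
    rw [this]; simp
end

/-- Hyperbolic Chang–Wilson–Wolff inequality: if `f` is a finite linear
combination of Haar functions `h_{j,m}` with `|j| = n`, then
`‖f | exp(L^{2/(d-1)})‖ ≤ C ‖Sf‖_{L_∞}`. -/
theorem hyperbolic_cww (d : ℕ) (hd : 2 ≤ d) (ψ : ℝ → ℝ)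
    (hψ : IsYoungExp (2 / ((d:ℝ) - 1)) ψ) :
    ∃ C : ℝ, 0 < C ∧ ∀ (n : ℕ), 1 ≤ n →
      ∀ (F : Finset ((Fin d → ℤ) × (Fin d → ℕ))) (c : (Fin d → ℤ) × (Fin d → ℕ) → ℝ),
        (∀ pm ∈ F, (∀ i, -1 ≤ pm.1 i) ∧ (∀ i, pm.2 i < 2 ^ (pm.1 i).toNat) ∧
          jnorm d pm.1 = n) →
        orliczNorm d ψ (fun x => ∑ pm ∈ F, c pm * haarFn d pm.1 pm.2 x) ≤
          ENNReal.ofReal C *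
            essSup (sqFnE d (fun x => ∑ pm ∈ F, c pm * haarFn d pm.1 pm.2 x))
              (volume.restrict (unitCubeIco d)) := by
  obtain ⟨s, rfl⟩ : ∃ s, d = s + 1 := ⟨d - 1, by omega⟩
  have hs : 1 ≤ s := by omega
  rw [show (((s+1 : ℕ) : ℝ) - 1) = s by push_cast; ring] at hψ
  obtain ⟨C, hC, hmain⟩ := cww_orlicz s hs ψ hψ
  refine ⟨C, hC, ?_⟩
  intro n hn F c hF
  set f : (Fin (s+1) → ℝ) → ℝ := fun x => ∑ pm ∈ F, c pm * haarFn (s+1) pm.1 pm.2 x with hf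
  set E := essSup (sqFnE (s+1) f) (volume.restrict (unitCubeIco (s+1))) with hE
  have hmeas : MeasurableSet (unitCubeIco (s+1)) :=
    MeasurableSet.univ_pi (fun _ => measurableSet_Ico)
  have claim : ∀ B : ℝ, 0 < B → E ≤ ENNReal.ofReal B →
      orliczNorm (s+1) ψ f ≤ ENNReal.ofReal (C * B) := by
    intro B hB hEB
    set M := n + 1 with hM
    set fh : (Fin (s+1) → Fin (2^M)) → ℝ := fun q =>
      ∑ l : Fin (s+1) → Fin (M+1), (∏ i, cwwSg M (l i) (q i)) *
        cwwA M F c l (fun i => cwwPos M (l i) (q i)) with hfh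
    have hsq : ∀ q : Fin (s+1) → Fin (2^M),
        ∑ l, (cwwA M F c l (fun i => cwwPos M (l i) (q i)))^2 ≤ B^2 := by
      apply cww_ae_grid (s+1) M (fun q =>
        ∑ l, (cwwA M F c l (fun i => cwwPos M (l i) (q i)))^2 ≤ B^2)
      filter_upwards [ENNReal.ae_le_essSup (μ := volume.restrict (unitCubeIco (s+1))) (sqFnE (s+1) f),
        ae_restrict_mem hmeas] with x hx hxc
      have h1 := cww_sq_grid F c hF x hxc
      have h2 : (sqFnE (s+1) f x)^2 ≤ (ENNReal.ofReal B)^2 := by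
        gcongr; exact hx.trans hEB
      have h3 := h1.trans h2
      rw [← ENNReal.ofReal_pow hB.le] at h3
      exact (ENNReal.ofReal_le_ofReal_iff (by positivity)).mp h3
    have hmom := hmain (Fin (s+1) → Fin (2^M)) (fun q => |fh q| / B)
      (fun q => by positivity) (by
        intro k hk
        have h := cww_disc s M n (cwwA M F c) (cwwA_supp F c hF) (B^2) hsq k hk
        have e : ∀ q, ((|fh q| / B)^2)^k = ((fh q)^2)^k / (B^2)^k := by
          intro q; rw [div_pow, sq_abs, div_pow]
        simp only [e]
        rw [← Finset.sum_div, div_le_iff₀ (by positivity)]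
        refine h.trans ?_
        rw [mul_assoc]
        refine mul_le_mul_of_nonneg_left ?_ (by positivity)
        rw [mul_pow 2 (B^2) k, ← mul_assoc]
        refine mul_le_mul_of_nonneg_right ?_ (by positivity)
        unfold cwwK
        have : (2:ℝ)^k ≤ (2^k)^s := le_self_pow₀ (one_le_pow₀ (by norm_num)) (by omega)
        calc ((5120 * (k:ℝ))^k)^s * 2^k ≤ ((5120 * (k:ℝ))^k)^s * (2^k)^s := by gcongr
          _ = _ := by rw [← mul_pow, ← mul_pow]; ring_nf)
    have hK : 0 < C * B ∧ ∫ x in unitCubeIco (s+1), ψ (|f x| / (C * B)) ≤ 1 := by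
      refine ⟨by positivity, ?_⟩
      have e : ∀ x ∈ unitCubeIco (s+1), ψ (|f x| / (C * B)) =
          (fun q => ψ (|fh q| / B / C)) (fun i => cwwPhi M (x i)) := by
        intro x hx
        have : f x = fh (fun i => cwwPhi M (x i)) := cww_f_grid F c hF x hx
        simp only [this]
        rw [div_div, mul_comm B C]
      rw [setIntegral_congr_fun hmeas e, cww_integral_grid (s+1) M (fun q => ψ (|fh q| / B / C))]
      calc _ ≤ (1/2^M)^(s+1) * (Fintype.card (Fin (s+1) → Fin (2^M)) : ℝ) := by gcongr
        _ = 1 := by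
          simp only [Fintype.card_pi, Fintype.card_fin, Finset.prod_const, Finset.card_univ]
          push_cast
          rw [← mul_pow, one_div, inv_mul_cancel₀ (by positivity), one_pow]
    unfold orliczNorm
    exact iInf_le (fun K : {K : ℝ // 0 < K ∧ ∫ x in unitCubeIco (s+1), ψ (|f x| / K) ≤ 1} =>
      ENNReal.ofReal K.1) ⟨C * B, hK⟩
  by_cases hEt : E = ⊤
  · rw [hEt, ENNReal.mul_top (by simpa using hC)]; exact le_top
  apply ENNReal.le_of_forall_pos_le_add
  intro ε hε _
  have hε' : (0:ℝ) < ε := hε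
  have h := claim (E.toReal + ε / C) (by positivity) (by
    rw [← ENNReal.ofReal_toReal hEt, ENNReal.toReal_ofReal ENNReal.toReal_nonneg]
    apply ENNReal.ofReal_le_ofReal
    have : 0 < (ε:ℝ) / C := by positivity
    linarith)
  refine h.trans (le_of_eq ?_)
  rw [show C * (E.toReal + ε / C) = C * E.toReal + ε by field_simp,
    ENNReal.ofReal_add (by positivity) hε'.le, ENNReal.ofReal_mul hC.le, ENNReal.ofReal_toReal hEt,
    ENNReal.ofReal_coe_nnreal]

end
end

section
/- (Interlacing) Let d ∈ ℕ and let C_1,…,C_{2d} ∈ 𝔽_2^{ℕ×ℕ} (each with only finitely many nonzero entries in every column) generate an order 1 digital (t′,2d)-sequence over 𝔽_2. Define matrices E_1,…,E_d ∈ 𝔽_2^{ℕ×ℕ} by interlacing the rows: the (2u+v)-th row of E_j equals the (u+1)-st row of C_{2(j−1)+v}, for all j ∈ {1,…,d}, u ∈ ℕ_0 and v ∈ {1,2}. Then E_1,…,E_d generate an order 2 digital (t,d)-sequence over 𝔽_2 with t = 2t′ + d. -/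
open MeasureTheory
open scoped ENNReal

noncomputable section

lemma aux_one {m : ℕ} (r : Fin m → ℕ) (hr : StrictAnti r) (l : Fin m) :
    r l + 1 ≤ ∑ l ∈ Finset.univ.filter (fun l : Fin m => (l:ℕ) < 2), (r l + 1) := by
  have h0 : 0 < m := by have := l.isLt; omega
  have h1 : r l ≤ r ⟨0, h0⟩ := hr.antitone (by rw [Fin.le_def]; simp)
  have h2 := Finset.single_le_sum (f := fun l : Fin m => r l + 1)
    (s := Finset.univ.filter (fun l : Fin m => (l:ℕ) < 2)) (fun i _ => Nat.zero_le _)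
    (a := ⟨0, h0⟩) (by simp)
  omega

lemma aux_two {m : ℕ} (r : Fin m → ℕ) (hr : StrictAnti r) (l l' : Fin m) (h : l ≠ l') :
    r l + r l' + 2 ≤ ∑ l ∈ Finset.univ.filter (fun l : Fin m => (l:ℕ) < 2), (r l + 1) := by
  wlog hlt : l < l' generalizing l l'
  · have := this l' l h.symm (lt_of_le_of_ne (not_lt.mp hlt) h.symm)
    omega
  rw [Fin.lt_def] at hlt
  have h0 : 0 < m := by have := l.isLt; omega
  have h1 : 1 < m := by have := l'.isLt; omega
  have e1 : r l ≤ r ⟨0, h0⟩ := hr.antitone (by rw [Fin.le_def]; simp)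
  have e2 : r l' ≤ r ⟨1, h1⟩ := hr.antitone (by rw [Fin.le_def]; simp; omega)
  have h2 := Finset.sum_le_sum_of_subset (f := fun l : Fin m => r l + 1)
    (s := {⟨0, h0⟩, ⟨1, h1⟩})
    (t := Finset.univ.filter (fun l : Fin m => (l:ℕ) < 2)) (by
      intro x hx
      simp only [Finset.mem_insert, Finset.mem_singleton] at hx
      rcases hx with rfl | rfl <;> simp)
  rw [Finset.sum_pair (by simp)] at h2
  omega

/-- Number of leading rows used in the component of parity `v`. -/
def auxA {m : ℕ} (r : Fin m → ℕ) (v : ℕ) : ℕ :=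
  Finset.univ.sup (fun l : Fin m => if r l % 2 = v then r l / 2 + 1 else 0)

lemma auxA_le {m : ℕ} (r : Fin m → ℕ) (l : Fin m) : r l / 2 < auxA r (r l % 2) := by
  have := Finset.le_sup (f := fun l' : Fin m => if r l' % 2 = r l % 2 then r l' / 2 + 1 else 0)
    (Finset.mem_univ l)
  simp only [if_true] at this
  exact this

lemma auxA_cases {m : ℕ} (r : Fin m → ℕ) (v : ℕ) :
    auxA r v = 0 ∨ ∃ l, r l % 2 = v ∧ auxA r v = r l / 2 + 1 := by
  by_cases hm : (Finset.univ : Finset (Fin m)).Nonempty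
  · obtain ⟨l, -, hl⟩ := Finset.exists_mem_eq_sup _ hm
      (fun l : Fin m => if r l % 2 = v then r l / 2 + 1 else 0)
    change auxA r v = _ at hl
    split_ifs at hl with h
    · exact Or.inr ⟨l, h, hl⟩
    · exact Or.inl hl
  · left
    rw [Finset.not_nonempty_iff_eq_empty] at hm
    simp [auxA, hm]

lemma auxA_sum {m : ℕ} (r : Fin m → ℕ) (hr : StrictAnti r) :
    2 * (auxA r 0 + auxA r 1) ≤
      ∑ l ∈ Finset.univ.filter (fun l : Fin m => (l:ℕ) < 2), (r l + 1) + 1 := by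
  rcases auxA_cases r 0 with h0 | ⟨l, hl, h0⟩ <;> rcases auxA_cases r 1 with h1 | ⟨l', hl', h1⟩
  · omega
  · have := aux_one r hr l'
    omega
  · have := aux_one r hr l
    omega
  · have := aux_two r hr l l' (by rintro rfl; omega)
    omega

lemma aux_sum_pairs (d : ℕ) (f : Fin d → ℕ → ℕ) :
    ∑ i : Fin (2*d), f ⟨(i:ℕ) / 2, by have := i.isLt; omega⟩ ((i:ℕ) % 2)
      = ∑ j, (f j 0 + f j 1) := by
  have : ∀ j, f j 0 + f j 1 = ∑ v : Fin 2, f j v := by intro j; simp [Fin.sum_univ_two]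
  simp_rw [this]
  rw [← Fintype.sum_prod_type' (fun j (v : Fin 2) => f j v)]
  symm
  refine Fintype.sum_equiv (finProdFinEquiv.trans (finCongr (Nat.mul_comm d 2))) _ _ ?_
  rintro ⟨j, v⟩
  have hv := v.isLt
  have e1 : ((v:ℕ) + 2 * (j:ℕ)) / 2 = j := by omega
  have e2 : ((v:ℕ) + 2 * (j:ℕ)) % 2 = v := by omega
  simp [e1, e2]

lemma aux_top {m : ℕ} :
    ∑ l ∈ Finset.univ.filter (fun l : Fin m => (l:ℕ) < 1), (m - 1 - (l:ℕ) + 1) ≤ m := by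
  rcases Nat.eq_zero_or_pos m with rfl | h
  · simp
  · have : Finset.univ.filter (fun l : Fin m => (l:ℕ) < 1) = {⟨0, h⟩} := by
      ext x
      simp [Fin.ext_iff]
    rw [this, Finset.sum_singleton]
    simp only
    omega

theorem interlacing_order_two (d : ℕ) (hd : 0 < d) (t' : ℕ)
    (C : Fin (2*d) → ℕ → ℕ → ZMod 2)
    (hcol : ∀ j ℓ, ∃ K, ∀ k, K ≤ k → C j k ℓ = 0)
    (hC : IsOrderSeq 1 t' (2*d) C)
    (E : Fin d → ℕ → ℕ → ZMod 2)
    (hE : ∀ (j : Fin d) (k ℓ : ℕ),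
      E j k ℓ = C ⟨2 * (j:ℕ) + k % 2, by have := j.isLt; omega⟩ (k / 2) ℓ) :
    IsOrderSeq 2 (2 * t' + d) d E := by
  intro n hn ν r hr hq hsum
  set a : Fin (2*d) → ℕ := fun i =>
    auxA (r ⟨(i:ℕ) / 2, by have := i.isLt; omega⟩) ((i:ℕ) % 2) with ha
  have hasum : ∑ i, a i = ∑ j, (auxA (r j) 0 + auxA (r j) 1) :=
    aux_sum_pairs d (fun j v => auxA (r j) v)
  have hbound : ∑ i, a i ≤ n - t' := by
    have h1 : ∑ j, 2 * (auxA (r j) 0 + auxA (r j) 1) ≤ ∑ j : Fin d,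
        (∑ l ∈ Finset.univ.filter (fun l : Fin (ν j) => (l:ℕ) < 2), (r j l + 1) + 1) :=
      Finset.sum_le_sum fun j _ => auxA_sum (r j) (hr j)
    rw [← Finset.mul_sum, ← hasum, Finset.sum_add_distrib] at h1
    simp only [Finset.sum_const, Finset.card_univ, Fintype.card_fin, smul_eq_mul, mul_one] at h1
    omega
  have key := hC n (by omega) a (fun i l => a i - 1 - (l:ℕ))
    (by
      intro i l l' h
      have := l'.isLt
      rw [Fin.lt_def] at h
      simp only
      omega)
    (by
      intro i l
      have h1 := Finset.single_le_sum (f := a) (s := Finset.univ)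
        (fun i _ => Nat.zero_le _) (Finset.mem_univ i)
      have := l.isLt
      omega)
    (by
      refine le_trans (Finset.sum_le_sum fun i _ => aux_top) ?_
      omega)
  have hlt : ∀ p : Σ j : Fin d, Fin (ν j),
      r p.1 p.2 / 2 < a ⟨2 * (p.1:ℕ) + r p.1 p.2 % 2, by have := p.1.isLt; omega⟩ := by
    rintro ⟨j, l⟩
    have e1 : (⟨(2 * (j:ℕ) + r j l % 2) / 2, by have := j.isLt; omega⟩ : Fin d) = j := by
      ext
      simp only
      omega
    have e2 : (2 * (j:ℕ) + r j l % 2) % 2 = r j l % 2 := by omega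
    have := auxA_le (r j) l
    simp only [ha]
    rw [e1, e2]
    exact this
  let g : (Σ j : Fin d, Fin (ν j)) → Σ i : Fin (2*d), Fin (a i) := fun p =>
    ⟨⟨2 * (p.1:ℕ) + r p.1 p.2 % 2, by have := p.1.isLt; omega⟩,
      ⟨a ⟨2 * (p.1:ℕ) + r p.1 p.2 % 2, by have := p.1.isLt; omega⟩ - 1 - r p.1 p.2 / 2,
        by have := hlt p; omega⟩⟩
  have hg2 : ∀ p, a (g p).1 - 1 - ((g p).2 : ℕ) = r p.1 p.2 / 2 := by
    intro p
    have := hlt p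
    simp only [g]
    omega
  have hg : Function.Injective g := by
    intro p p' h
    have h2 : r p.1 p.2 / 2 = r p'.1 p'.2 / 2 := by rw [← hg2 p, ← hg2 p', h]
    have h1 : 2 * (p.1:ℕ) + r p.1 p.2 % 2 = 2 * (p'.1:ℕ) + r p'.1 p'.2 % 2 :=
      congrArg (fun x => (x.1 : ℕ)) h
    obtain ⟨j, l⟩ := p
    obtain ⟨j', l'⟩ := p'
    simp only at h1 h2
    have hj : j = j' := by ext; omega
    subst hj
    have : r j l = r j l' := by omega
    rw [(hr j).injective this]
  convert key.comp g hg using 1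
  funext p col
  simp only [Function.comp, hE]
  rw [hg2 p]

end
end
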